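/- arXiv:2507.17570 — 8 statements merged into one kernel-verified Lean document; each statement's English description precedes it below -/
import Mathlib

section
/- Let K be a group and let Z be a central subgroup of K generated by an element of infinite order (so Z is infinite cyclic and every element of K commutes with every element of Z). If the quotient group K/Z is a free group, then K is isomorphic to the direct product ℤ × (K/Z). -/
/-!
A free quotient splits: sending each free generator of `K ⧸ ⟨z⟩` to a chosen preimage in `K`
extends to a homomorphic section `s` of the projection. Since `z` is central,
`(n, q) ↦ z ^ n * s q` is a homomorphism `ℤ × K ⧸ ⟨z⟩ → K`. It is injective because applying the
projection recovers `q`, after which `n` is determined as `z` has infinite order; it is surjective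
because `k` and `s k` differ by a power of `z`.
-/

/-- If `Z = ⟨z⟩` is an infinite cyclic central subgroup of `K` and `K/Z` is a free group,
then `K ≅ ℤ × K/Z`. -/
theorem central_infinite_cyclic_by_free_is_product {K : Type*} [Group K] (z : K)
    (hz : ∀ n : ℤ, n ≠ 0 → z ^ n ≠ 1)
    (hcentral : ∀ k : K, k * z = z * k)
    [hN : (Subgroup.zpowers z).Normal]
    [hfree : IsFreeGroup (K ⧸ Subgroup.zpowers z)] :
    Nonempty (K ≃* Multiplicative ℤ × (K ⧸ Subgroup.zpowers z)) := by
  let p := QuotientGroup.mk' (Subgroup.zpowers z)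
  obtain ⟨s, hs⟩ : ∃ s : (K ⧸ Subgroup.zpowers z) →* K, ∀ q, p (s q) = q := by
    choose t ht using QuotientGroup.mk'_surjective (Subgroup.zpowers z)
    refine ⟨IsFreeGroup.lift fun a => t (IsFreeGroup.of a), fun q => ?_⟩
    refine DFunLike.congr_fun (f := p.comp _) (g := MonoidHom.id _) ?_ q
    exact IsFreeGroup.ext_hom fun a => by
      rw [MonoidHom.comp_apply, IsFreeGroup.lift_of, MonoidHom.id_apply]
      exact ht _
  have hp (n : ℤ) : p (z ^ n) = 1 :=
    (QuotientGroup.eq_one_iff _).2 (Subgroup.zpow_mem_zpowers z n)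
  let f : Multiplicative ℤ × (K ⧸ Subgroup.zpowers z) →* K :=
    (zpowersHom K z).noncommCoprod s fun n q => by
      rw [zpowersHom_apply]
      exact Commute.zpow_left (hcentral (s q)).symm _
  have hf (n : Multiplicative ℤ) (q) : f (n, q) = z ^ n.toAdd * s q := rfl
  refine ⟨(MulEquiv.ofBijective f ⟨?_, fun k => ?_⟩).symm⟩
  · refine (injective_iff_map_eq_one f).2 ?_
    rintro ⟨n, q⟩ h
    rw [hf] at h
    have hq : q = 1 := by
      have := congrArg p h
      rwa [map_mul, hp, hs, one_mul, map_one] at this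
    subst hq
    rw [map_one, mul_one] at h
    have hn : n.toAdd = 0 := by
      by_contra hn
      exact hz _ hn h
    exact Prod.ext hn rfl
  · have h : k * (s (p k))⁻¹ ∈ Subgroup.zpowers z := by
      rw [← QuotientGroup.eq_one_iff]
      change p (k * (s (p k))⁻¹) = 1
      rw [map_mul, map_inv, hs, mul_inv_cancel]
    obtain ⟨n, hn⟩ := Subgroup.mem_zpowers_iff.1 h
    refine ⟨(Multiplicative.ofAdd n, p k), ?_⟩
    rw [hf, toAdd_ofAdd, hn, inv_mul_cancel_right]
end

section
/- Let m, n be nonzero integers. The Baumslag–Solitar group BS(m,n) is residually finite if and only if |m| = 1, or |n| = 1, or |m| = |n|. -/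
/-!
Throughout, `swap` (`x ↦ x`, `t ↦ t⁻¹`) identifies `BS(m,n)` with `BS(n,m)`.

*Not residually finite otherwise.* Suppose `m ∤ n` and `n ≠ ±1`, and put `d = gcd(m,n)`. In a finite
quotient `x^m` and `x^n` are conjugate, so they have the same order `q`; then `(x^d)^q = 1` by
Bézout, so `⟨x^m⟩` fills out `⟨x^d⟩` and `t⁻¹ x^d t` is a power of `t⁻¹ x^m t = x^n`
(`zpow_gcd_mem_zpowers`). Hence `[t⁻¹ x^d t, x]` dies in every finite quotient, while it is
nontrivial in `BS(m,n)` by Britton's lemma (`not_commute_conj`), since `x^d ∉ ⟨x^m⟩` and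
`x ∉ ⟨x^n⟩`. If neither `(m,n)` nor `(n,m)` satisfies the hypotheses, then `|m| = 1`, `|n| = 1` or
`|m| = |n|`.

*The case `|m| = 1`.* Here `t⁻¹ x t = x^k` with `k = mn`, so every element is `t^a x^b t^{-c}` with
`a, c ≥ 0`. If `a ≠ c` it is detected by the exponent of `t` modulo a large integer; if `a = c` it
is detected by the affine action on `ZMod N`, `x : y ↦ y + 1`, `t : y ↦ k⁻¹ y`, with `N` coprime
to `k` and not dividing `b` (`exists_affine`).

*The case `|m| = |n|`.* Now `⟨x^m⟩` is normal. Its nontrivial elements are detected by the affine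
action again. For `g ∉ ⟨x^m⟩`, let the quotient `Q` by `⟨x^m⟩` act on itself by translation: `g`
moves `1`. In `Q` the orbits of `x` are finite, so there is a finite `x`-invariant set `S ⊆ Q`
containing the path that a word for `g` traces from `1`. The partial injection that `t` induces on
`S` extends to a permutation of `S`, and with any such extension the word still moves `1`
(`exists_finite_of_zpow_eq_one`). As `x^m` acts trivially on `S`, the relation `t⁻¹ x^m t = x^n`
holds, so this is a finite quotient of `BS(m,n)`.
-/

/-- The single relator of the Baumslag–Solitar group `BS(m,n)`:
`t⁻¹ x^m t x^{-n}`, where `x = FreeGroup.of true` and `t = FreeGroup.of false`. -/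
def bsRels (m n : ℤ) : Set (FreeGroup Bool) :=
  {(FreeGroup.of false)⁻¹ * (FreeGroup.of true) ^ m * FreeGroup.of false *
    (FreeGroup.of true) ^ (-n)}

/-- The Baumslag–Solitar group `BS(m,n) = ⟨x, t ∣ t⁻¹ x^m t = x^n⟩`. -/
def BS (m n : ℤ) : Type := PresentedGroup (bsRels m n)

instance (m n : ℤ) : Group (BS m n) := by unfold BS; infer_instance

/-- The image of the generator `x` in `BS(m,n)`. -/
def BS.x (m n : ℤ) : BS m n := PresentedGroup.of (rels := bsRels m n) true

/-- The image of the generator `t` in `BS(m,n)`. -/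
def BS.t (m n : ℤ) : BS m n := PresentedGroup.of (rels := bsRels m n) false

/-- A group is residually finite if every nontrivial element is detected by a
homomorphism to a finite group. -/
def IsResiduallyFinite (G : Type*) [Group G] : Prop :=
  ∀ g : G, g ≠ 1 → ∃ (H : Type) (_ : Group H) (_ : Finite H) (f : G →* H), f g ≠ 1

open Subgroup
open scoped commutatorElement

/-! ### Homomorphisms and words -/

namespace BS

/-- The assignment `x ↦ X`, `t ↦ T` on the free generators. -/
def gens {H : Type*} (X T : H) : Bool → H := fun b => cond b X T

variable {H : Type*} [Group H] {m n : ℤ}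

theorem rel (m n : ℤ) : (t m n)⁻¹ * x m n ^ m * t m n = x m n ^ n := by
  have h : PresentedGroup.mk (bsRels m n) ((FreeGroup.of false)⁻¹ * (FreeGroup.of true) ^ m *
      FreeGroup.of false * (FreeGroup.of true) ^ (-n)) = 1 :=
    (QuotientGroup.eq_one_iff _).2 (Subgroup.subset_normalClosure rfl)
  rw [map_mul, map_zpow, zpow_neg, mul_inv_eq_one, map_mul, map_mul, map_inv, map_zpow] at h
  exact h

/-- The homomorphism out of `BS(m,n)` given by a solution of its defining relation. -/
def lift (X T : H) (h : T⁻¹ * X ^ m * T = X ^ n) : BS m n →* H :=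
  PresentedGroup.toGroup (rels := bsRels m n) (f := gens X T) (by
    rintro r rfl
    simp [gens, h])

@[simp] theorem lift_x (X T : H) (h : T⁻¹ * X ^ m * T = X ^ n) : lift X T h (x m n) = X :=
  PresentedGroup.toGroup.of (rels := bsRels m n) (f := gens X T) _

@[simp] theorem lift_t (X T : H) (h : T⁻¹ * X ^ m * T = X ^ n) : lift X T h (t m n) = T :=
  PresentedGroup.toGroup.of (rels := bsRels m n) (f := gens X T) _

theorem exists_word (g : BS m n) :
    ∃ w : FreeGroup Bool, FreeGroup.lift (gens (x m n) (t m n)) w = g := by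
  obtain ⟨w, hw⟩ := PresentedGroup.mk_surjective (bsRels m n) g
  refine ⟨w, Eq.trans ?_ hw⟩
  have : FreeGroup.lift (gens (x m n) (t m n)) = PresentedGroup.mk (bsRels m n) := by
    ext b
    cases b <;> simp [gens] <;> rfl
  rw [this]
  rfl

theorem map_word (f : BS m n →* H) (w : FreeGroup Bool) :
    f (FreeGroup.lift (gens (x m n) (t m n)) w) =
      FreeGroup.lift (gens (f (x m n)) (f (t m n))) w := by
  have : f.comp (FreeGroup.lift (gens (x m n) (t m n))) =
      FreeGroup.lift (gens (f (x m n)) (f (t m n))) := by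
    ext b
    cases b <;> simp [gens]
  exact DFunLike.congr_fun this w

theorem hom_ext {f g : BS m n →* H} (hx : f (x m n) = g (x m n)) (ht : f (t m n) = g (t m n)) :
    f = g := by
  ext a
  obtain ⟨w, rfl⟩ := exists_word a
  rw [map_word, map_word, hx, ht]

/-- The homomorphism `x ↦ x`, `t ↦ t⁻¹`, which is an isomorphism with inverse `swap n m`. -/
def swap (m n : ℤ) : BS m n →* BS n m :=
  lift (x n m) (t n m)⁻¹ (by rw [← rel n m]; group)

theorem swap_injective (m n : ℤ) : Function.Injective (swap m n) := by
  have : (swap n m).comp (swap m n) = MonoidHom.id _ := by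
    apply hom_ext <;> simp [swap]
  intro a b hab
  have h := congrArg (swap n m) hab
  rwa [← MonoidHom.comp_apply, ← MonoidHom.comp_apply, this] at h

end BS

theorem IsResiduallyFinite.of_injective {G G' : Type*} [Group G] [Group G'] (i : G →* G')
    (hi : Function.Injective i) (h : IsResiduallyFinite G') : IsResiduallyFinite G := by
  intro g hg
  obtain ⟨H, _, hH, f, hf⟩ := h (i g) (fun h1 => hg (hi (h1.trans (map_one i).symm)))
  exact ⟨H, _, hH, f.comp i, hf⟩

/-! ### An element killed by all finite quotients -/

theorem zpow_gcd_mem_zpowers {H : Type*} [Group H] [Finite H] {m n : ℤ} {X T : H}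
    (h : T⁻¹ * X ^ m * T = X ^ n) : X ^ (Int.gcd m n : ℤ) ∈ zpowers (X ^ m) := by
  have ho : orderOf (X ^ n) = orderOf (X ^ m) := by
    rw [← h]
    have : T⁻¹ * X ^ m * T = MulAut.conj T⁻¹ (X ^ m) := by simp
    rw [this]
    exact MulEquiv.orderOf_eq _ _
  have hle : zpowers (X ^ m) ≤ zpowers (X ^ (Int.gcd m n : ℤ)) := by
    rw [zpowers_le]
    obtain ⟨c, hc⟩ := Int.gcd_dvd_left m n
    exact ⟨c, by simp only; rw [← zpow_mul, ← hc]⟩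
  have hq : (X ^ (Int.gcd m n : ℤ)) ^ orderOf (X ^ m) = 1 := by
    have h1 : (X ^ m) ^ orderOf (X ^ m) = 1 := pow_orderOf_eq_one _
    have h2 : (X ^ n) ^ orderOf (X ^ m) = 1 := ho ▸ pow_orderOf_eq_one _
    rw [Int.gcd_eq_gcd_ab, zpow_add, zpow_mul, zpow_mul,
      (((Commute.refl X).zpow_zpow m n).zpow_zpow _ _).mul_pow, ← zpow_natCast, ← zpow_natCast,
      zpow_comm, zpow_comm (X ^ n), zpow_natCast, zpow_natCast, h1, h2]
    simp
  have heq : zpowers (X ^ m) = zpowers (X ^ (Int.gcd m n : ℤ)) := by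
    apply Subgroup.eq_of_le_of_card_ge hle
    rw [Nat.card_zpowers, Nat.card_zpowers]
    exact Nat.le_of_dvd (orderOf_pos _) (orderOf_dvd_of_pow_eq_one hq)
  rw [heq]
  exact mem_zpowers _

/-- The `m`-th power map on the infinite cyclic group. -/
def zpowHom (m : ℤ) : Multiplicative ℤ →* Multiplicative ℤ := zpowGroupHom m

theorem zpowHom_injective {m : ℤ} (hm : m ≠ 0) : Function.Injective (zpowHom m) := by
  intro a b h
  have h' : m * (a.toAdd : ℤ) = m * (b.toAdd : ℤ) := by
    have := congrArg Multiplicative.toAdd h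
    simpa only [zpowHom, zpowGroupHom_apply, toAdd_zpow, smul_eq_mul] using this
  exact Multiplicative.toAdd.injective (mul_left_cancel₀ (M₀ := ℤ) hm h')

theorem mem_range_zpowHom {m a : ℤ} :
    Multiplicative.ofAdd a ∈ (zpowHom m).range ↔ m ∣ a := by
  constructor
  · rintro ⟨b, hb⟩
    refine ⟨b.toAdd, ?_⟩
    simpa [zpowHom] using (congrArg Multiplicative.toAdd hb).symm
  · rintro ⟨b, rfl⟩
    exact ⟨Multiplicative.ofAdd b, by
      rw [zpowHom, zpowGroupHom_apply, ← ofAdd_zsmul, smul_eq_mul]⟩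

/-- The isomorphism `⟨x^m⟩ ≃ ⟨x^n⟩`, `x^m ↦ x^n`, of subgroups of the infinite cyclic group. -/
noncomputable def assoc {m n : ℤ} (hm : m ≠ 0) (hn : n ≠ 0) :
    (zpowHom m).range ≃* (zpowHom n).range :=
  ((zpowHom m).ofInjective (zpowHom_injective hm)).symm.trans
    ((zpowHom n).ofInjective (zpowHom_injective hn))

theorem hnn_rel {m n : ℤ} (hm : m ≠ 0) (hn : n ≠ 0) :
    ((HNNExtension.t : HNNExtension _ _ _ (assoc hm hn))⁻¹)⁻¹ *
      (HNNExtension.of (Multiplicative.ofAdd (1 : ℤ))) ^ m * (HNNExtension.t)⁻¹ =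
      (HNNExtension.of (Multiplicative.ofAdd (1 : ℤ))) ^ n := by
  have h := HNNExtension.equiv_eq_conj (φ := assoc hm hn)
    ((zpowHom m).ofInjective (zpowHom_injective hm) (Multiplicative.ofAdd 1))
  simp only [assoc, MulEquiv.trans_apply, MulEquiv.symm_apply_apply] at h
  rw [inv_inv, ← MonoidHom.map_zpow, ← MonoidHom.map_zpow]
  exact h.symm

/-- Britton's lemma for the commutator of `t⁻¹ x^d t` and `x`, in `BS(m,n)` seen as an
HNN extension of `⟨x⟩`. -/
theorem not_commute_conj {m n d : ℤ} (hm : m ≠ 0) (hn : n ≠ 0) (hmd : ¬ m ∣ d) (hn1 : ¬ n ∣ 1) :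
    ⁅(BS.t m n)⁻¹ * BS.x m n ^ d * BS.t m n, BS.x m n⁆ ≠ 1 := by
  intro h
  have h' := congrArg (BS.lift _ _ (hnn_rel hm hn)) h
  simp only [map_mul, map_inv, map_zpow, BS.lift_x, BS.lift_t, map_one,
    commutatorElement_def] at h'
  have hmd' : ¬ m ∣ -d := by rwa [dvd_neg]
  -- In the HNN extension the stable letter is `t⁻¹`.
  let w : HNNExtension.NormalWord.ReducedWord (Multiplicative ℤ)
      (zpowHom m).range (zpowHom n).range :=
    { head := 1
      toList := [(1, Multiplicative.ofAdd d), (-1, Multiplicative.ofAdd 1),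
        (1, Multiplicative.ofAdd (-d)), (-1, Multiplicative.ofAdd (-1))]
      chain := by
        simp only [List.isChain_cons_cons, List.isChain_singleton, and_true,
          HNNExtension.toSubgroup_one, HNNExtension.toSubgroup_neg_one, mem_range_zpowHom]
        exact ⟨fun h => absurd h hmd, fun h => absurd h hn1, fun h => absurd h hmd'⟩ }
  have hw := HNNExtension.ReducedWord.toList_eq_nil_of_mem_of_range (assoc hm hn) w (by
    refine ⟨1, ?_⟩
    rw [map_one, ← h']
    simp [w, HNNExtension.NormalWord.ReducedWord.prod, ofAdd_neg, mul_assoc, ← map_zpow,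
      ← ofAdd_zsmul])
  simp [w] at hw

theorem not_residuallyFinite {m n : ℤ} (hm : m ≠ 0) (hn : n ≠ 0) (hmn : ¬ m ∣ n) (hn1 : ¬ n ∣ 1) :
    ¬ IsResiduallyFinite (BS m n) := by
  intro hrf
  have hmd : ¬ m ∣ (Int.gcd m n : ℤ) := fun h => hmn (h.trans (Int.gcd_dvd_right m n))
  obtain ⟨H, _, _, f, hf⟩ := hrf _ (not_commute_conj hm hn hmd hn1)
  apply hf
  have hr : (f (BS.t m n))⁻¹ * f (BS.x m n) ^ m * f (BS.t m n) = f (BS.x m n) ^ n := by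
    simpa using congrArg f (BS.rel m n)
  obtain ⟨k, hk⟩ := zpow_gcd_mem_zpowers hr
  have hconj : (f (BS.t m n))⁻¹ * f (BS.x m n) ^ (Int.gcd m n : ℤ) * f (BS.t m n) =
      (f (BS.x m n) ^ n) ^ k := by
    rw [← hr, ← hk]
    have := conj_zpow (i := k) (a := (f (BS.t m n))⁻¹) (b := f (BS.x m n) ^ m)
    rw [inv_inv] at this
    exact this.symm
  rw [map_commutatorElement, map_mul, map_mul, map_inv, map_zpow, hconj,
    commutatorElement_eq_one_iff_commute]
  exact ((Commute.refl _).zpow_left n).zpow_left k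

/-! ### The affine action on `ZMod N` -/

/-- For `k, b ≠ 0` the relation `t⁻¹ x t = x^k` has a finite model in which `x^b ≠ 1`. -/
theorem exists_affine {k b : ℤ} (hk : k ≠ 0) (hb : b ≠ 0) :
    ∃ (H : Type) (_ : Group H) (_ : Finite H) (X T : H),
      T⁻¹ * X * T = X ^ k ∧ X ^ b ≠ 1 := by
  -- `N = |kb| + 1` is coprime to `k` and larger than `|b|`.
  obtain ⟨N, hN⟩ : ∃ N : ℕ, N = (k * b).natAbs + 1 := ⟨_, rfl⟩
  have : NeZero N := ⟨by omega⟩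
  have hu : IsUnit ((k : ℤ) : ZMod N) := by
    rw [ZMod.coe_int_isUnit_iff_isCoprime]
    rcases Int.natAbs_eq (k * b) with h | h
    · exact ⟨1, -b, by rw [hN, Nat.cast_add, ← h]; push_cast; ring⟩
    · exact ⟨1, b, by rw [hN, Nat.cast_add, ← neg_eq_iff_eq_neg.2 h]; push_cast; ring⟩
  obtain ⟨u, hu⟩ := hu
  have hadd : ∀ (j : ℤ) (y : ZMod N), ((Equiv.addRight (1 : ZMod N)) ^ j) y = y + j := by
    intro j y
    simp
  refine ⟨Equiv.Perm (ZMod N), inferInstance, inferInstance, Equiv.addRight 1,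
    Units.mulLeft u⁻¹, ?_, ?_⟩
  · ext y
    rw [hadd]
    have : ((Units.mulLeft u⁻¹)⁻¹ : Equiv.Perm (ZMod N)) = Units.mulLeft u := by
      rw [inv_eq_iff_mul_eq_one]
      ext z
      simp
    rw [this]
    simp [mul_add, ← hu]
  · intro h
    have h0 := DFunLike.congr_fun h (0 : ZMod N)
    rw [hadd] at h0
    simp only [zero_add, Equiv.Perm.coe_one, id_eq] at h0
    rw [ZMod.intCast_zmod_eq_zero_iff_dvd] at h0
    have h1 := Int.le_of_dvd (abs_pos.2 hb) ((dvd_abs _ _).2 h0)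
    have h2 : |b| ≤ |k| * |b| :=
      le_mul_of_one_le_left (abs_nonneg _) (Int.one_le_abs hk)
    rw [← abs_mul, Int.abs_eq_natAbs (k * b)] at h2
    omega

/-! ### The case `|m| = 1` -/

section One

variable {G : Type*} [Group G] {X T : G} {k : ℤ}

theorem mul_pow_of_conj (h : X * T = T * X ^ k) (a : ℕ) : ∀ j : ℤ,
    X ^ j * T ^ a = T ^ a * X ^ (j * k ^ a) := by
  have h1 : ∀ j : ℤ, X ^ j * T = T * X ^ (j * k) := by
    intro j
    have : SemiconjBy T (X ^ k) X := h.symm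
    have := this.zpow_right j
    rw [← zpow_mul, mul_comm] at this
    exact this.symm
  induction a with
  | zero => simp
  | succ a ih =>
    intro j
    rw [pow_succ, ← mul_assoc, ih, mul_assoc, h1, ← mul_assoc, pow_succ, mul_assoc j]

/-- If `t⁻¹ x t = x^k`, then every element of `⟨x, t⟩` has the form `t^a x^b t^{-c}`, `a, c ≥ 0`:
such elements are stable under left multiplication by `x^{±1}` and `t^{±1}`. -/
theorem exists_normal_form (h : X * T = T * X ^ k) (w : FreeGroup Bool) :
    ∃ (a c : ℕ) (b : ℤ), FreeGroup.lift (BS.gens X T) w = T ^ a * X ^ b * (T ^ c)⁻¹ := by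
  suffices key : ∀ (a c : ℕ) (b : ℤ), ∃ (a' c' : ℕ) (b' : ℤ),
      FreeGroup.lift (BS.gens X T) w * (T ^ a * X ^ b * (T ^ c)⁻¹) =
        T ^ a' * X ^ b' * (T ^ c')⁻¹ by
    simpa using key 0 0 0
  induction w using FreeGroup.induction_on with
  | C1 => exact fun a c b => ⟨a, c, b, by simp⟩
  | of s =>
    intro a c b
    cases s with
    | false => exact ⟨a + 1, c, b, by simp [BS.gens, pow_succ', mul_assoc]⟩
    | true =>
      refine ⟨a, c, k ^ a + b, ?_⟩
      have := mul_pow_of_conj h a 1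
      rw [zpow_one, one_mul] at this
      simp only [BS.gens, FreeGroup.lift_apply_of, cond_true, zpow_add]
      simp only [← mul_assoc, this]
  | inv_of s _ =>
    intro a c b
    cases s with
    | false =>
      cases a with
      | succ a => exact ⟨a, c, b, by simp [BS.gens, pow_succ', mul_assoc]⟩
      | zero =>
        refine ⟨0, c + 1, b * k, ?_⟩
        have := mul_pow_of_conj h 1 b
        rw [pow_one, pow_one] at this
        have h2 : T⁻¹ * X ^ b = X ^ (b * k) * T⁻¹ := by
          rw [inv_mul_eq_iff_eq_mul, ← mul_assoc, ← this, mul_inv_cancel_right]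
        simp only [BS.gens, map_inv, FreeGroup.lift_apply_of, cond_false, pow_zero, one_mul,
          ← mul_assoc, h2]
        rw [mul_assoc, ← mul_inv_rev, ← pow_succ]
    | true =>
      refine ⟨a, c, -k ^ a + b, ?_⟩
      have := mul_pow_of_conj h a (-1)
      rw [zpow_neg_one, neg_one_mul] at this
      simp only [BS.gens, map_inv, FreeGroup.lift_apply_of, cond_true, zpow_add _ (-k ^ a)]
      simp only [← mul_assoc, this]
  | mul v w hv hw =>
    intro a c b
    obtain ⟨a', c', b', h'⟩ := hw a c b
    obtain ⟨a'', c'', b'', h''⟩ := hv a' c' b'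
    exact ⟨a'', c'', b'', by rw [map_mul, mul_assoc, h', h'']⟩

end One

theorem residuallyFinite_of_abs_eq_one {m n : ℤ} (hm : |m| = 1) (hn : n ≠ 0) :
    IsResiduallyFinite (BS m n) := by
  have hmm : m * m = 1 := by rw [← abs_mul_abs_self, hm, one_mul]
  have hm0 : m ≠ 0 := by rintro rfl; simp at hm
  have hrel : BS.x m n * BS.t m n = BS.t m n * BS.x m n ^ (n * m) := by
    have h : ((BS.t m n)⁻¹ * BS.x m n ^ m * BS.t m n) ^ m = (BS.x m n ^ n) ^ m :=
      congrArg (· ^ m) (BS.rel m n)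
    have h2 := conj_zpow (i := m) (a := (BS.t m n)⁻¹) (b := BS.x m n ^ m)
    rw [inv_inv] at h2
    rw [h2, ← zpow_mul, ← zpow_mul, hmm, zpow_one] at h
    rw [← h]
    group
  intro g hg
  obtain ⟨w, rfl⟩ := BS.exists_word g
  obtain ⟨a, c, b, hw⟩ := exists_normal_form hrel w
  rw [hw] at hg ⊢
  by_cases hac : a = c
  · subst hac
    have hb : b ≠ 0 := by
      rintro rfl
      simp at hg
    obtain ⟨H, _, hH, X, T, hXT, hX⟩ := exists_affine (k := n * m) (mul_ne_zero hn hm0) hb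
    refine ⟨H, _, hH, BS.lift X T ?_, ?_⟩
    · have h2 := conj_zpow (i := m) (a := T⁻¹) (b := X)
      rw [inv_inv, hXT, ← zpow_mul, mul_assoc, hmm, mul_one] at h2
      exact h2.symm
    · simpa using hX
  · -- The exponent sum of `t` is `a - c`, and `0 < |a - c| < a + c + 1`.
    refine ⟨Multiplicative (ZMod (a + c + 1)), inferInstance, inferInstance,
      BS.lift 1 (Multiplicative.ofAdd 1) (by simp), ?_⟩
    simp only [map_mul, map_pow, map_inv, map_zpow, BS.lift_x, BS.lift_t, one_zpow, mul_one]
    rw [Ne, mul_inv_eq_one]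
    intro h
    have hmod : ((a : ℕ) : ZMod (a + c + 1)) = ((c : ℕ) : ZMod (a + c + 1)) := by
      simpa using congrArg Multiplicative.toAdd h
    rw [ZMod.natCast_eq_natCast_iff', Nat.mod_eq_of_lt (by omega), Nat.mod_eq_of_lt (by omega)]
      at hmod
    exact hac hmod

/-! ### The case `|m| = |n|` -/

/-- A partial injection `y ↦ a * y` of a finite subset `S` of a group extends to a permutation
of `S`. -/
theorem exists_perm_extend {Q : Type*} [Group Q] (S : Set Q) [Finite S] (a : Q) :
    ∃ σ : Equiv.Perm S, ∀ y z : S, (z : Q) = a * y → σ y = z := by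
  let e : {y : S // a * (y : Q) ∈ S} ≃ {z : S // a⁻¹ * (z : Q) ∈ S} :=
    { toFun := fun y => ⟨⟨a * y.1, y.2⟩, by simp⟩
      invFun := fun z => ⟨⟨a⁻¹ * z.1, z.2⟩, by simp⟩
      left_inv := fun y => by ext; simp
      right_inv := fun z => by ext; simp }
  classical
  refine ⟨e.extendSubtype, fun y z h => ?_⟩
  rw [Equiv.extendSubtype_apply_of_mem e y (by rw [← h]; exact z.2)]
  ext
  exact h.symm

/-- A word tracks only finitely many points: given a word `w` and a starting point `v`, there is
a finite set `F` such that, for any permutations of a set `S ⊇ F` which agree with left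
multiplication by `X` and `T` as far as these stay in `S`, the word `w` acts on `v` as it does
in `Q`. -/
theorem exists_finite_path {Q : Type*} [Group Q] (X T : Q) (w : FreeGroup Bool) :
    ∀ v : Q, ∃ F : Set Q, F.Finite ∧ v ∈ F ∧ ∀ (S : Set Q), F ⊆ S →
      ∀ X' T' : Equiv.Perm S, (∀ y z : S, (z : Q) = X * y → X' y = z) →
        (∀ y z : S, (z : Q) = T * y → T' y = z) → ∀ hv : v ∈ S,
          ((FreeGroup.lift (BS.gens X' T') w ⟨v, hv⟩ : S) : Q) =
            FreeGroup.lift (BS.gens X T) w * v := by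
  induction w using FreeGroup.induction_on with
  | C1 => exact fun v => ⟨{v}, by simp, by simp, by simp⟩
  | of s =>
    intro v
    refine ⟨{v, BS.gens X T s * v}, by simp, by simp, ?_⟩
    intro S hS X' T' hX hT hv
    have hz : BS.gens X T s * v ∈ S := hS (by simp)
    have : BS.gens X' T' s ⟨v, hv⟩ = ⟨_, hz⟩ := by
      cases s with
      | false => exact hT ⟨v, hv⟩ ⟨_, hz⟩ rfl
      | true => exact hX ⟨v, hv⟩ ⟨_, hz⟩ rfl
    simp [this]
  | inv_of s _ =>
    intro v
    refine ⟨{v, (BS.gens X T s)⁻¹ * v}, by simp, by simp, ?_⟩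
    intro S hS X' T' hX hT hv
    have hz : (BS.gens X T s)⁻¹ * v ∈ S := hS (by simp)
    have : BS.gens X' T' s ⟨_, hz⟩ = ⟨v, hv⟩ := by
      cases s with
      | false => exact hT ⟨_, hz⟩ ⟨v, hv⟩ (by simp [BS.gens])
      | true => exact hX ⟨_, hz⟩ ⟨v, hv⟩ (by simp [BS.gens])
    rw [map_inv, map_inv, FreeGroup.lift_apply_of, FreeGroup.lift_apply_of, ← this,
      ← Equiv.Perm.mul_apply, inv_mul_cancel, Equiv.Perm.one_apply]
  | mul u w hu hw =>
    intro v
    obtain ⟨F, hF, hvF, h⟩ := hw v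
    obtain ⟨F', hF', hvF', h'⟩ := hu (FreeGroup.lift (BS.gens X T) w * v)
    refine ⟨F ∪ F', hF.union hF', Or.inl hvF, ?_⟩
    intro S hS X' T' hX hT hv
    have hwv := hS (Or.inr hvF')
    have e1 : FreeGroup.lift (BS.gens X' T') w ⟨v, hv⟩ = ⟨_, hwv⟩ :=
      Subtype.ext (h S (Set.subset_union_left.trans hS) X' T' hX hT hv)
    rw [map_mul, Equiv.Perm.mul_apply, e1,
      h' S (Set.subset_union_right.trans hS) X' T' hX hT hwv, map_mul, mul_assoc]

/-- If `X^m = 1` with `m ≠ 0` and a word is nontrivial at `(X, T)`, then it is nontrivial at some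
pair `(X', T')` in a finite group with `X'^m = 1`. -/
theorem exists_finite_of_zpow_eq_one {Q : Type} [Group Q] {X T : Q} {m : ℤ} (hm : m ≠ 0)
    (hX : X ^ m = 1) (w : FreeGroup Bool) (hw : FreeGroup.lift (BS.gens X T) w ≠ 1) :
    ∃ (H : Type) (_ : Group H) (_ : Finite H) (X' T' : H),
      X' ^ m = 1 ∧ FreeGroup.lift (BS.gens X' T') w ≠ 1 := by
  obtain ⟨F, hF, h1F, h⟩ := exists_finite_path X T w 1
  have hfin : (zpowers X : Set Q).Finite :=
    finite_zpowers.2 (isOfFinOrder_iff_zpow_eq_one.2 ⟨m, hm, hX⟩)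
  let S : Set Q := Set.image2 (· * ·) (zpowers X : Set Q) F
  have hS : S.Finite := hfin.image2 _ hF
  have : Finite S := hS
  have hFS : F ⊆ S := fun v hv => ⟨1, one_mem _, v, hv, one_mul v⟩
  have hXS : ∀ y, MulAction.toPermHom Q Q X y ∈ S ↔ y ∈ S := by
    intro y
    change X * y ∈ S ↔ y ∈ S
    constructor
    · rintro ⟨p, hp, f, hf, hpf⟩
      exact ⟨X⁻¹ * p, mul_mem (inv_mem (mem_zpowers X)) hp, f, hf, by
        simp only at hpf
        simp [mul_assoc, hpf]⟩
    · rintro ⟨p, hp, f, hf, rfl⟩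
      exact ⟨X * p, mul_mem (mem_zpowers X) hp, f, hf, by simp [mul_assoc]⟩
  obtain ⟨T', hT'⟩ := exists_perm_extend S T
  let X' : Equiv.Perm S := (MulAction.toPermHom Q Q X).subtypePerm (p := (· ∈ S)) hXS
  refine ⟨Equiv.Perm S, inferInstance, inferInstance, X', T', ?_, ?_⟩
  · have : (MulAction.toPermHom Q Q X) ^ m = 1 := by rw [← map_zpow, hX, map_one]
    simp only [X', Equiv.Perm.subtypePerm_zpow, this]
    rfl
  · intro hw1
    have := h S hFS X' T' (fun y z hyz => Subtype.ext hyz.symm) hT' (hFS h1F)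
    rw [hw1, mul_one] at this
    exact hw this.symm

theorem zpowers_zpow_normal {m n : ℤ} (hmn : |m| = |n|) :
    (zpowers (BS.x m n ^ m)).Normal := by
  have hz : zpowers (BS.x m n ^ n) = zpowers (BS.x m n ^ m) := by
    rcases abs_eq_abs.1 hmn with rfl | rfl
    · rfl
    · rw [zpow_neg, zpowers_inv]
  have hX : BS.x m n ∈ normalizer (zpowers (BS.x m n ^ m)) := by
    rw [mem_normalizer_iff_map_conj_eq, MonoidHom.map_zpowers]
    congr 1
    simp [(Commute.refl (BS.x m n)).zpow_right m |>.eq]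
  have hT : BS.t m n ∈ normalizer (zpowers (BS.x m n ^ m)) := by
    rw [← inv_mem_iff, mem_normalizer_iff_map_conj_eq, MonoidHom.map_zpowers]
    refine Eq.trans ?_ hz
    congr 1
    simpa using BS.rel m n
  rw [← normalizer_eq_top_iff, eq_top_iff]
  intro g _
  obtain ⟨w, rfl⟩ := BS.exists_word g
  refine FreeGroup.induction_on w (by simp) ?_ ?_ ?_
  · rintro (_ | _) <;> simpa [BS.gens]
  · intro s hs
    rw [map_inv]
    exact inv_mem hs
  · intro u v hu hv
    rw [map_mul]
    exact mul_mem hu hv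

theorem residuallyFinite_of_abs_eq {m n : ℤ} (hm : m ≠ 0) (hmn : |m| = |n|) :
    IsResiduallyFinite (BS m n) := by
  intro g hg
  have := zpowers_zpow_normal hmn
  by_cases hgN : g ∈ zpowers (BS.x m n ^ m)
  · obtain ⟨j, rfl⟩ := hgN
    simp only [← zpow_mul] at hg ⊢
    have hb : m * j ≠ 0 := by
      intro h
      rw [h] at hg
      simp at hg
    obtain ⟨k, hk, hkn⟩ : ∃ k : ℤ, k ≠ 0 ∧ k * m = n := by
      rcases abs_eq_abs.1 hmn with h | h
      · exact ⟨1, by norm_num, by linarith⟩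
      · exact ⟨-1, by norm_num, by linarith⟩
    obtain ⟨H, _, hH, X, T, hXT, hX⟩ := exists_affine hk hb
    refine ⟨H, _, hH, BS.lift X T ?_, ?_⟩
    · have h2 := conj_zpow (i := m) (a := T⁻¹) (b := X)
      rw [inv_inv, hXT, ← zpow_mul, hkn] at h2
      exact h2.symm
    · simpa using hX
  · obtain ⟨w, rfl⟩ := BS.exists_word g
    let π := QuotientGroup.mk' (zpowers (BS.x m n ^ m))
    have hπ : FreeGroup.lift (BS.gens (π (BS.x m n)) (π (BS.t m n))) w ≠ 1 := by
      rw [← BS.map_word]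
      exact fun h => hgN ((QuotientGroup.eq_one_iff _).1 h)
    have hπX : π (BS.x m n) ^ m = 1 := by
      rw [← map_zpow]
      exact (QuotientGroup.eq_one_iff _).2 (mem_zpowers _)
    obtain ⟨H, _, hH, X, T, hX, hne⟩ := exists_finite_of_zpow_eq_one hm hπX w hπ
    have hXn : X ^ n = 1 := by
      rcases abs_eq_abs.1 hmn with h | h
      · rw [← h, hX]
      · rw [← neg_eq_iff_eq_neg.2 h, zpow_neg, hX, inv_one]
    refine ⟨H, _, hH, BS.lift X T (by rw [hX, hXn]; simp), ?_⟩
    rwa [BS.map_word, BS.lift_x, BS.lift_t]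

/-- `BS(m,n)` is residually finite iff `|m| = 1`, `|n| = 1`, or `|m| = |n|`. -/
theorem bs_residuallyFinite_iff (m n : ℤ) (hm : m ≠ 0) (hn : n ≠ 0) :
    IsResiduallyFinite (BS m n) ↔ |m| = 1 ∨ |n| = 1 ∨ |m| = |n| := by
  have hunit : ∀ a : ℤ, a ∣ 1 → |a| = 1 := fun a h => Int.isUnit_iff_abs_eq.1 (isUnit_of_dvd_one h)
  constructor
  · intro h
    by_contra! hcon
    obtain ⟨h1, h2, h3⟩ := hcon
    by_cases hd : m ∣ n
    · have hd' : ¬ n ∣ m := fun hd' => h3 (by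
        rw [Int.abs_eq_natAbs, Int.abs_eq_natAbs,
          Nat.dvd_antisymm (Int.natAbs_dvd_natAbs.2 hd) (Int.natAbs_dvd_natAbs.2 hd')])
      exact not_residuallyFinite hn hm hd' (fun h => h1 (hunit m h))
        (h.of_injective _ (BS.swap_injective n m))
    · exact not_residuallyFinite hm hn hd (fun h => h2 (hunit n h)) h
  · rintro (h | h | h)
    · exact residuallyFinite_of_abs_eq_one h hn
    · exact (residuallyFinite_of_abs_eq_one h hm).of_injective _ (BS.swap_injective m n)
    · exact residuallyFinite_of_abs_eq hm h
end

section
/- Let m, n be nonzero integers. If the Baumslag–Solitar group BS(m,n) is residually finite, then m divides n or n divides m. -/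
open scoped commutatorElement

theorem BS.relation (m n : ℤ) : (BS.t m n)⁻¹ * BS.x m n ^ m * BS.t m n = BS.x m n ^ n := by
  have h : PresentedGroup.mk (bsRels m n) ((FreeGroup.of false)⁻¹ * (FreeGroup.of true) ^ m *
      FreeGroup.of false * (FreeGroup.of true) ^ (-n)) = 1 :=
    (QuotientGroup.eq_one_iff _).2 (Subgroup.subset_normalClosure rfl)
  simp only [map_mul, map_inv, map_zpow, zpow_neg] at h
  exact mul_inv_eq_one.1 h

/-- The universal property of `BS(m,n)`. -/
theorem BS.exists_hom {G : Type*} [Group G] {m n : ℤ} (x t : G) (h : t⁻¹ * x ^ m * t = x ^ n) :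
    ∃ f : BS m n →* G, f (BS.x m n) = x ∧ f (BS.t m n) = t := by
  have hr : ∀ r ∈ bsRels m n, FreeGroup.lift (fun b : Bool => if b then x else t) r = 1 := by
    rintro r rfl
    simp [h]
  exact ⟨PresentedGroup.toGroup hr, by exact (PresentedGroup.toGroup.of hr).trans (by simp),
    by exact (PresentedGroup.toGroup.of hr).trans (by simp)⟩

theorem commutator_eq_one_of_finite {H : Type*} [Group H] [Finite H] {m n : ℤ} {x t : H}
    (h : t⁻¹ * x ^ m * t = x ^ n) : ⁅t⁻¹ * x ^ (Int.gcd m n : ℤ) * t, x⁆ = 1 := by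
  have conj (j : ℤ) : t⁻¹ * x ^ (m * j) * t = x ^ (n * j) := by
    rw [zpow_mul, zpow_mul, ← h]
    simpa using (conj_zpow (i := j) (a := t⁻¹) (b := x ^ m)).symm
  have hk : (orderOf x : ℤ) ≠ 0 := by exact_mod_cast (orderOf_pos x).ne'
  obtain ⟨q, hq⟩ : (Int.gcd (orderOf x) m : ℤ) ∣ orderOf x := Int.gcd_dvd_left ..
  obtain ⟨r, hr⟩ : (Int.gcd (orderOf x) m : ℤ) ∣ m := Int.gcd_dvd_right ..
  have hq0 : q ≠ 0 := by rintro rfl; exact hk (by rw [hq, mul_zero])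
  -- With `g = gcd(k, m)` and `k = g q`, the power `(x^m)^q` is trivial, hence so is `(x^n)^q`.
  have hgn : (Int.gcd (orderOf x) m : ℤ) ∣ n := by
    have h1 : x ^ (m * q) = 1 := by
      rw [← orderOf_dvd_iff_zpow_eq_one]
      exact ⟨r, by rw [hq]; nth_rw 1 [hr]; ring⟩
    have h2 : x ^ (n * q) = 1 := by rw [← conj q, h1]; simp
    rw [← orderOf_dvd_iff_zpow_eq_one, hq] at h2
    exact Int.dvd_of_mul_dvd_mul_right hq0 h2
  obtain ⟨c, hc⟩ := Int.dvd_coe_gcd (Int.gcd_dvd_right (orderOf x : ℤ) m) hgn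
  have hx : x ^ (Int.gcd m n : ℤ) = x ^ (m * (Int.gcdB (orderOf x) m * c)) := by
    rw [hc, Int.gcd_eq_gcd_ab, add_mul, zpow_add, mul_assoc, zpow_mul, zpow_natCast,
      pow_orderOf_eq_one, one_zpow, one_mul, mul_assoc]
  rw [hx, conj, commutatorElement_eq_one_iff_commute]
  exact (Commute.refl x).zpow_left _

theorem zpowGroupHom_injective {m : ℤ} (hm : m ≠ 0) :
    Function.Injective (zpowGroupHom m : Multiplicative ℤ →* Multiplicative ℤ) := by
  intro a b hab
  have h : m * a.toAdd = m * b.toAdd := by simpa using congrArg Multiplicative.toAdd hab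
  exact Multiplicative.toAdd.injective (mul_left_cancel₀ hm h)

theorem ofAdd_mem_range_zpowGroupHom {m k : ℤ} :
    Multiplicative.ofAdd k ∈ (zpowGroupHom m : Multiplicative ℤ →* Multiplicative ℤ).range ↔
      m ∣ k := by
  constructor
  · rintro ⟨a, ha⟩
    exact ⟨a.toAdd, by simpa using (congrArg Multiplicative.toAdd ha).symm⟩
  · rintro ⟨a, rfl⟩
    exact ⟨Multiplicative.ofAdd a, by rw [zpowGroupHom_apply, ← ofAdd_zsmul, smul_eq_mul]⟩

/-- The isomorphism `mℤ ≃ nℤ`, `m ↦ n`, between subgroups of the infinite cyclic group. -/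
noncomputable def multiplesEquiv {m n : ℤ} (hm : m ≠ 0) (hn : n ≠ 0) :
    (zpowGroupHom m : Multiplicative ℤ →* Multiplicative ℤ).range ≃*
      (zpowGroupHom n : Multiplicative ℤ →* Multiplicative ℤ).range :=
  (MonoidHom.ofInjective (zpowGroupHom_injective hm)).symm.trans
    (MonoidHom.ofInjective (zpowGroupHom_injective hn))

theorem multiplesEquiv_apply {m n : ℤ} (hm : m ≠ 0) (hn : n ≠ 0) (a : Multiplicative ℤ) :
    (multiplesEquiv hm hn ⟨zpowGroupHom m a, a, rfl⟩ : Multiplicative ℤ) = a ^ n := by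
  have : (⟨zpowGroupHom m a, a, rfl⟩ :
      (zpowGroupHom m : Multiplicative ℤ →* Multiplicative ℤ).range) =
      MonoidHom.ofInjective (zpowGroupHom_injective hm) a := rfl
  rw [this, multiplesEquiv, MulEquiv.trans_apply, MulEquiv.symm_apply_apply]
  rfl

theorem BS.commutator_ne_one {m n d : ℤ} (hm : m ≠ 0) (hn : n ≠ 0) (hd : ¬ m ∣ d)
    (h1 : ¬ n ∣ 1) : ⁅(BS.t m n)⁻¹ * BS.x m n ^ d * BS.t m n, BS.x m n⁆ ≠ 1 := by
  intro hw
  let φ := multiplesEquiv hm hn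
  let X : HNNExtension _ _ _ φ := HNNExtension.of (Multiplicative.ofAdd 1)
  -- In the HNN extension the stable letter conjugates `x^m` to `x^n` in the opposite direction
  -- to `t`, so `t` maps to its inverse.
  let T : HNNExtension _ _ _ φ := HNNExtension.t
  have hX (k : ℤ) : X ^ k = HNNExtension.of (Multiplicative.ofAdd k) := by
    rw [← map_zpow, ← ofAdd_zsmul, smul_eq_mul, mul_one]
  obtain ⟨f, hfx, hft⟩ := BS.exists_hom (m := m) (n := n) X T⁻¹ (by
    have h := HNNExtension.equiv_eq_conj (φ := φ)
      ⟨zpowGroupHom m (Multiplicative.ofAdd 1), _, rfl⟩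
    rw [multiplesEquiv_apply, map_zpow] at h
    simp only [zpowGroupHom_apply, map_zpow] at h
    rw [inv_inv]
    exact h.symm)
  have hfw := congrArg f hw
  simp only [commutatorElement_def, map_mul, map_inv, map_zpow, hfx, hft, map_one] at hfw
  let w : HNNExtension.NormalWord.ReducedWord (Multiplicative ℤ)
      (zpowGroupHom m : Multiplicative ℤ →* Multiplicative ℤ).range
      (zpowGroupHom n : Multiplicative ℤ →* Multiplicative ℤ).range :=
    { head := 1
      toList := [(1, .ofAdd d), (-1, .ofAdd 1), (1, .ofAdd (-d)), (-1, .ofAdd (-1))]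
      chain := by
        simp only [List.isChain_cons_cons, HNNExtension.toSubgroup_one,
          HNNExtension.toSubgroup_neg_one, ofAdd_mem_range_zpowGroupHom, dvd_neg]
        simp [hd, h1] }
  have hprod : w.prod φ = 1 := by
    rw [← hfw]
    simp only [HNNExtension.NormalWord.ReducedWord.prod, w, List.map_cons, List.map_nil,
      List.prod_cons, List.prod_nil, map_one, ← hX]
    simp only [Units.val_one, Units.val_neg, zpow_neg, zpow_one]
    change _ * (T * _ * _) = _
    group
    rfl
  have := HNNExtension.ReducedWord.toList_eq_nil_of_mem_of_range φ w (hprod ▸ one_mem _)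
  simp [w] at this

/-- If `BS(m,n)` is residually finite then `m ∣ n` or `n ∣ m`. -/
theorem bs_residuallyFinite_imp_dvd (m n : ℤ) (hm : m ≠ 0) (hn : n ≠ 0)
    (hrf : IsResiduallyFinite (BS m n)) : m ∣ n ∨ n ∣ m := by
  by_contra! hmn
  obtain ⟨H, _, _, f, hf⟩ := hrf _ (BS.commutator_ne_one (d := Int.gcd m n) hm hn
    (fun h => hmn.1 (h.trans (Int.gcd_dvd_right ..))) (fun h => hmn.2 (h.trans (one_dvd m))))
  apply hf
  have hrel := congrArg f (BS.relation m n)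
  simp only [map_mul, map_inv, map_zpow] at hrel
  simpa only [map_commutatorElement, map_mul, map_inv, map_zpow] using
    commutator_eq_one_of_finite hrel
end

section
/- Let m, n be integers with |m| ≥ 2 and |n| ≥ 2, and let x, t denote the images of the generators in the Baumslag–Solitar group BS(m,n). Then the elements x t x⁻¹ and t freely generate a free subgroup of BS(m,n) of rank 2; that is, the homomorphism from the free group on two generators to BS(m,n) sending the generators to x t x⁻¹ and t is injective. -/
namespace BSFree

open Multiplicative

lemma zpow_inj {k : ℤ} (hk : 2 ≤ |k|) :
    Function.Injective (zpowGroupHom k : Multiplicative ℤ →* Multiplicative ℤ) := by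
  have hk0 : k ≠ 0 := by rintro rfl; simp at hk
  intro a b h
  apply toAdd.injective
  have h' := congrArg toAdd h
  simpa [hk0] using h'

/-- The subgroup `⟨x^k⟩` of the infinite cyclic group generated by `x = ofAdd 1`. -/
abbrev P (k : ℤ) : Subgroup (Multiplicative ℤ) := (zpowGroupHom k).range

/-- The isomorphism `⟨x^n⟩ ≃ ⟨x^m⟩` sending `x^n` to `x^m`. -/
noncomputable def φ {m n : ℤ} (hm : 2 ≤ |m|) (hn : 2 ≤ |n|) : P n ≃* P m :=
  (MonoidHom.ofInjective (zpow_inj hn)).symm.trans (MonoidHom.ofInjective (zpow_inj hm))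

/-- The HNN extension of `⟨x⟩` with `t x^n t⁻¹ = x^m`. -/
abbrev H {m n : ℤ} (hm : 2 ≤ |m|) (hn : 2 ≤ |n|) : Type :=
  HNNExtension (Multiplicative ℤ) (P n) (P m) (φ hm hn)

lemma H_rel {m n : ℤ} (hm : 2 ≤ |m|) (hn : 2 ≤ |n|) :
    (HNNExtension.t : H hm hn) * HNNExtension.of (ofAdd 1) ^ n =
      HNNExtension.of (ofAdd 1) ^ m * HNNExtension.t := by
  have h := HNNExtension.t_mul_of (φ := φ hm hn)
    (MonoidHom.ofInjective (zpow_inj hn) (ofAdd 1))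
  rw [← map_zpow HNNExtension.of, ← map_zpow HNNExtension.of]
  simpa only [φ, MulEquiv.trans_apply, MulEquiv.symm_apply_apply, MonoidHom.ofInjective_apply,
    zpowGroupHom_apply] using h

/-- The homomorphism from `BS(m,n)` to the HNN extension matching `x` and `t`. -/
noncomputable def toH {m n : ℤ} (hm : 2 ≤ |m|) (hn : 2 ≤ |n|) : BS m n →* H hm hn :=
  PresentedGroup.toGroup (rels := bsRels m n)
    (f := fun b : Bool => if b then HNNExtension.of (ofAdd 1) else HNNExtension.t) (by
      rintro r rfl
      simp only [map_mul, map_inv, map_zpow, FreeGroup.lift_apply_of, if_true, Bool.false_eq_true,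
        if_false]
      rw [mul_assoc _ _ HNNExtension.t, ← H_rel hm hn]
      group)

lemma toH_x {m n : ℤ} (hm : 2 ≤ |m|) (hn : 2 ≤ |n|) :
    toH hm hn (BS.x m n) = HNNExtension.of (ofAdd 1) :=
  PresentedGroup.toGroup.of _

lemma toH_t {m n : ℤ} (hm : 2 ≤ |m|) (hn : 2 ≤ |n|) :
    toH hm hn (BS.t m n) = HNNExtension.t :=
  PresentedGroup.toGroup.of _

/-- The conjugator attached to a free generator: `x` for `x t x⁻¹` and `1` for `t`. -/
def c (b : Bool) : Multiplicative ℤ := if b then ofAdd 1 else 1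

/-- The exponent of a letter of a free group word, as a unit of `ℤ`. -/
def u (e : Bool) : ℤˣ := if e then 1 else -1

/-- The conjugator of the first letter of a word. -/
def hd : List (Bool × Bool) → Multiplicative ℤ
  | [] => 1
  | a :: _ => c a.1

/-- The syllables `t^{±1} x^c` obtained from a word in `x t x⁻¹` and `t` by merging the power of
`x` that ends one letter with the one that begins the next; the power of `x` at the very beginning
is `hd`. -/
def conv : List (Bool × Bool) → List (ℤˣ × Multiplicative ℤ)
  | [] => []
  | a :: L => (u a.2, (c a.1)⁻¹ * hd L) :: conv L

/-- The power of `x` between two consecutive letters is `x^{-1}`, `1` or `x`, so it is a power of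
`x^k` only when it is trivial, i.e. when the letters involve the same free generator. -/
lemma eq_of_mem {k : ℤ} (hk : 2 ≤ |k|) {a b : Bool} (h : (c a)⁻¹ * c b ∈ P k) : a = b := by
  obtain ⟨z, hz⟩ := h
  have h' : k * toAdd z = toAdd ((c a)⁻¹ * c b) := by
    rw [← hz]; simp
  have not_one : ¬ k ∣ 1 := fun hd => by
    have := Int.le_of_dvd one_pos ((abs_dvd k 1).2 hd)
    omega
  cases a <;> cases b <;> simp only [c, toAdd_mul, toAdd_inv, if_true, Bool.false_eq_true,
    if_false, toAdd_ofAdd, toAdd_one] at h' ⊢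
  · exact absurd ⟨_, by simpa using h'.symm⟩ not_one
  · exact absurd ((dvd_neg).1 ⟨_, by simpa using h'.symm⟩) not_one

/-- A freely reduced word gives a product that is reduced in the sense of Britton's lemma. -/
lemma chain_conv {m n : ℤ} (hm : 2 ≤ |m|) (hn : 2 ≤ |n|) :
    ∀ L : List (Bool × Bool), FreeGroup.IsReduced L →
      (conv L).IsChain fun a b =>
        a.2 ∈ HNNExtension.toSubgroup (P n) (P m) a.1 → a.1 = b.1
  | [], _ => List.isChain_nil
  | [_], _ => List.isChain_singleton _
  | a :: b :: L, h => by
    have h2 := List.isChain_cons_cons.1 h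
    refine List.isChain_cons_cons.2 ⟨fun hmem => ?_, chain_conv hm hn (b :: L) h2.2⟩
    have hab : a.1 = b.1 := by
      rcases Int.units_eq_one_or (u a.2) with hu | hu <;> simp only [hu] at hmem
      · exact eq_of_mem hn hmem
      · exact eq_of_mem hm hmem
    exact congrArg u (h2.1 hab)

/-- The syllables of `L`, preceded by `hd L`, multiply to the image of `L` in the HNN extension. -/
lemma prod_conv {m n : ℤ} (hm : 2 ≤ |m|) (hn : 2 ≤ |n|) (L : List (Bool × Bool)) :
    (HNNExtension.of (hd L) : H hm hn) *
        ((conv L).map fun a => HNNExtension.t ^ (a.1 : ℤ) * HNNExtension.of a.2).prod =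
      toH hm hn (FreeGroup.lift (fun b : Bool =>
        if b then BS.x m n * BS.t m n * (BS.x m n)⁻¹ else BS.t m n) (FreeGroup.mk L)) := by
  induction L with
  | nil => simp [hd, conv, ← FreeGroup.one_eq_mk]
  | cons a L ih =>
    rw [FreeGroup.lift_mk] at ih ⊢
    rw [List.map_cons, List.prod_cons, map_mul, ← ih]
    obtain ⟨b, e⟩ := a
    cases b <;> cases e <;> simp [hd, conv, c, u, toH_x, toH_t, mul_assoc]

end BSFree

open BSFree in
/-- If `|m|, |n| ≥ 2` then `x t x⁻¹` and `t` freely generate a rank-2 free subgroup of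
`BS(m,n)`: the homomorphism from the free group on two generators sending them to
`x t x⁻¹` and `t` is injective. -/
theorem bs_free_subgroup (m n : ℤ) (hm : 2 ≤ |m|) (hn : 2 ≤ |n|) :
    Function.Injective
      (FreeGroup.lift (fun b : Bool =>
        if b then BS.x m n * BS.t m n * (BS.x m n)⁻¹ else BS.t m n)) := by
  rw [injective_iff_map_eq_one]
  intro w hw
  let R : HNNExtension.NormalWord.ReducedWord (Multiplicative ℤ) (P n) (P m) :=
    { head := hd w.toWord
      toList := conv w.toWord
      chain := chain_conv hm hn _ FreeGroup.isReduced_toWord }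
  have hR : R.prod (φ hm hn) = 1 := by
    refine (prod_conv hm hn w.toWord).trans ?_
    rw [FreeGroup.mk_toWord, hw, map_one]
  have hnil : conv w.toWord = [] :=
    HNNExtension.ReducedWord.toList_eq_nil_of_mem_of_range (φ hm hn) R
      (hR ▸ one_mem _)
  rw [← FreeGroup.toWord_eq_nil_iff]
  cases h : w.toWord with
  | nil => rfl
  | cons a L => simp [h, conv] at hnil
end

section
/- Let n be an integer with |n| ≥ 2 and let x denote the image of the first generator in BS(1,n). Then the normal closure of x in BS(1,n) is isomorphic, as a group, to the additive group ℤ[1/n] = {a / n^k : a ∈ ℤ, k ∈ ℕ} of rational numbers whose denominator is a power of n. -/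
/-- The additive subgroup `ℤ[1/n] = {a / n^k : a ∈ ℤ, k ∈ ℕ}` of `ℚ`. -/
def zInvPow (n : ℤ) (hn : n ≠ 0) : AddSubgroup ℚ where
  carrier := {q : ℚ | ∃ (a : ℤ) (k : ℕ), q = (a : ℚ) / (n : ℚ) ^ k}
  zero_mem' := ⟨0, 0, by norm_num⟩
  add_mem' := by
    rintro p q ⟨a, k, rfl⟩ ⟨b, l, rfl⟩
    refine ⟨a * n ^ l + b * n ^ k, k + l, ?_⟩
    have hn' : (n : ℚ) ≠ 0 := Int.cast_ne_zero.mpr hn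
    have h1 : (n : ℚ) ^ k ≠ 0 := pow_ne_zero _ hn'
    have h2 : (n : ℚ) ^ l ≠ 0 := pow_ne_zero _ hn'
    push_cast
    rw [div_add_div _ _ h1 h2, pow_add]
    ring
  neg_mem' := by
    rintro q ⟨a, k, rfl⟩
    exact ⟨-a, k, by push_cast; ring⟩

namespace BS

variable {n : ℤ}

theorem t_inv_mul_x_mul_t (n : ℤ) : (t 1 n)⁻¹ * x 1 n * t 1 n = x 1 n ^ n := by
  have h : PresentedGroup.mk (bsRels 1 n) ((FreeGroup.of false)⁻¹ * (FreeGroup.of true) ^ (1 : ℤ) *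
      FreeGroup.of false * (FreeGroup.of true) ^ (-n)) = 1 :=
    PresentedGroup.one_of_mem (by simp [bsRels])
  rw [zpow_one, zpow_neg, map_mul, map_inv, mul_inv_eq_one, map_zpow, map_mul, map_mul,
    map_inv] at h
  exact h

theorem t_inv_mul_x_zpow_mul_t (n a : ℤ) :
    (t 1 n)⁻¹ * x 1 n ^ a * t 1 n = x 1 n ^ (n * a) := by
  have h := conj_zpow (i := a) (a := (t 1 n)⁻¹) (b := x 1 n)
  rw [inv_inv, t_inv_mul_x_mul_t, ← zpow_mul] at h
  exact h.symm

/-- The element `t ^ k x ^ a t ^ (-k)` of `BS(1,n)`, which corresponds to `a / n ^ k` in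
`ℤ[1/n]`. -/
def conj (n a : ℤ) (k : ℕ) : BS 1 n := t 1 n ^ k * x 1 n ^ a * (t 1 n ^ k)⁻¹

theorem conj_succ (a : ℤ) (k : ℕ) : conj n a k = conj n (n * a) (k + 1) := by
  simp only [conj, ← t_inv_mul_x_zpow_mul_t, pow_succ]
  group

theorem conj_add_right (a : ℤ) (k l : ℕ) : conj n a k = conj n (n ^ l * a) (k + l) := by
  induction l with
  | zero => simp
  | succ l ih => rw [ih, conj_succ, pow_succ', mul_assoc, add_assoc]

theorem conj_mul_conj_same (a b : ℤ) (k : ℕ) : conj n a k * conj n b k = conj n (a + b) k := by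
  simp only [conj, zpow_add]
  group

theorem conj_mul_conj (a b : ℤ) (k l : ℕ) :
    conj n a k * conj n b l = conj n (n ^ l * a + n ^ k * b) (k + l) := by
  rw [conj_add_right a k l, conj_add_right b l k, add_comm l k, conj_mul_conj_same]

theorem inv_conj (a : ℤ) (k : ℕ) : (conj n a k)⁻¹ = conj n (-a) k := by
  simp only [conj, zpow_neg]
  group

/-- The subgroup of `BS(1,n)` consisting of the elements `t ^ k x ^ a t ^ (-k)`. -/
def conjSubgroup (n : ℤ) : Subgroup (BS 1 n) where
  carrier := {g | ∃ (a : ℤ) (k : ℕ), g = conj n a k}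
  one_mem' := ⟨0, 0, by simp [conj]⟩
  mul_mem' := by
    rintro _ _ ⟨a, k, rfl⟩ ⟨b, l, rfl⟩
    exact ⟨_, _, conj_mul_conj a b k l⟩
  inv_mem' := by
    rintro _ ⟨a, k, rfl⟩
    exact ⟨_, _, inv_conj a k⟩

theorem x_mem_conjSubgroup : x 1 n ∈ conjSubgroup n := ⟨1, 0, by simp [conj]⟩

theorem t_mul_conj_mul_inv (a : ℤ) (k : ℕ) :
    t 1 n * conj n a k * (t 1 n)⁻¹ = conj n a (k + 1) := by
  simp only [conj, pow_succ']
  group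

theorem t_inv_mul_conj_mul (a : ℤ) (k : ℕ) :
    (t 1 n)⁻¹ * conj n a k * t 1 n = conj n (n * a) k := by
  rw [conj_succ, ← t_mul_conj_mul_inv]
  group

theorem t_mem_normalizer_conjSubgroup :
    t 1 n ∈ Subgroup.normalizer (conjSubgroup n : Set (BS 1 n)) := by
  rw [Subgroup.mem_normalizer_iff]
  refine fun h => ⟨?_, ?_⟩
  · rintro ⟨a, k, rfl⟩
    exact ⟨_, _, t_mul_conj_mul_inv a k⟩
  · rintro ⟨a, k, hk⟩
    refine ⟨n * a, k, ?_⟩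
    rw [← t_inv_mul_conj_mul, ← hk]
    group

instance conjSubgroup_normal (n : ℤ) : (conjSubgroup n).Normal := by
  refine Subgroup.normalizer_eq_top_iff.mp (eq_top_iff.mpr fun g _ => ?_)
  refine PresentedGroup.generated_by (bsRels 1 n)
    (Subgroup.normalizer (conjSubgroup n : Set (BS 1 n))) (fun b => ?_) g
  cases b with
  | true => exact Subgroup.le_normalizer (H := conjSubgroup n) x_mem_conjSubgroup
  | false => exact t_mem_normalizer_conjSubgroup

theorem normalClosure_x_eq (n : ℤ) : Subgroup.normalClosure {x 1 n} = conjSubgroup n := by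
  apply le_antisymm
  · exact Subgroup.normalClosure_le_normal (Set.singleton_subset_iff.mpr x_mem_conjSubgroup)
  · rintro _ ⟨a, k, rfl⟩
    have hx : x 1 n ∈ Subgroup.normalClosure {x 1 n} :=
      Subgroup.subset_normalClosure (Set.mem_singleton _)
    have hN : (Subgroup.normalClosure {x 1 n}).Normal := Subgroup.normalClosure_normal
    exact hN.conj_mem _ (Subgroup.zpow_mem _ hx a) (t 1 n ^ k)

/-- The action of `BS(1,n)` on `ℚ` in which `x` acts as `q ↦ q + 1` and `t` as `q ↦ q / n`. -/
noncomputable def affineRep (n : ℤ) (hn : (n : ℚ) ≠ 0) : BS 1 n →* Equiv.Perm ℚ :=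
  PresentedGroup.toGroup (rels := bsRels 1 n)
    (f := fun b => if b then Equiv.addRight 1 else (Equiv.mulRight₀ (n : ℚ) hn)⁻¹) (by
      rintro _ rfl
      ext q
      simp [Equiv.Perm.mul_apply, add_mul, hn])

theorem affineRep_x (hn : (n : ℚ) ≠ 0) : affineRep n hn (x 1 n) = Equiv.addRight 1 :=
  PresentedGroup.toGroup.of _

theorem affineRep_t (hn : (n : ℚ) ≠ 0) :
    affineRep n hn (t 1 n) = (Equiv.mulRight₀ (n : ℚ) hn)⁻¹ :=
  PresentedGroup.toGroup.of _

theorem affineRep_conj (hn : (n : ℚ) ≠ 0) (a : ℤ) (k : ℕ) (q : ℚ) :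
    affineRep n hn (conj n a k) q = q + a / (n : ℚ) ^ k := by
  induction k generalizing q with
  | zero => simp [conj, affineRep_x]
  | succ k ih =>
    rw [← t_mul_conj_mul_inv, map_mul, map_mul, map_inv, affineRep_t, inv_inv,
      Equiv.Perm.mul_apply, Equiv.Perm.mul_apply, ih, Equiv.Perm.inv_eq_iff_eq]
    simp only [Equiv.mulRight₀_apply]
    field_simp
    ring

end BS

/-- For `|n| ≥ 2`, the normal closure of `x` in `BS(1,n)` is isomorphic to the additive
group `ℤ[1/n]`. -/
theorem bs_normalClosure_iso_zInvPow (n : ℤ) (hn : 2 ≤ |n|) :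
    Nonempty (Additive (Subgroup.normalClosure {BS.x 1 n}) ≃+
      zInvPow n (by intro h; subst h; simp at hn)) := by
  have hn0 : n ≠ 0 := by intro h; subst h; simp at hn
  have hq : (n : ℚ) ≠ 0 := Int.cast_ne_zero.mpr hn0
  rw [BS.normalClosure_x_eq]
  let φ : Additive (BS.conjSubgroup n) →+ zInvPow n hn0 := AddMonoidHom.mk'
    (fun g => ⟨BS.affineRep n hq (g.toMul : BS 1 n) 0, by
      obtain ⟨a, k, h⟩ := g.toMul.2
      exact ⟨a, k, by rw [h, BS.affineRep_conj, zero_add]⟩⟩) (by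
      intro g h
      obtain ⟨a, k, hg⟩ := g.toMul.2
      apply Subtype.ext
      simp only [toMul_add, Subgroup.coe_mul, map_mul, Equiv.Perm.mul_apply, AddSubgroup.coe_add]
      rw [hg, BS.affineRep_conj, BS.affineRep_conj, zero_add, add_comm])
  refine ⟨AddEquiv.ofBijective φ ⟨(injective_iff_map_eq_zero φ).mpr fun g hg => ?_, ?_⟩⟩
  · obtain ⟨a, k, h⟩ := g.toMul.2
    have h0 : BS.affineRep n hq (g.toMul : BS 1 n) 0 = 0 := congrArg Subtype.val hg
    rw [h, BS.affineRep_conj, zero_add, div_eq_zero_iff, or_iff_left (pow_ne_zero k hq),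
      Int.cast_eq_zero] at h0
    apply Additive.toMul.injective
    apply Subtype.ext
    rw [h, h0]
    simp [BS.conj]
  · rintro ⟨_, a, k, rfl⟩
    refine ⟨Additive.ofMul ⟨BS.conj n a k, a, k, rfl⟩, Subtype.ext ?_⟩
    exact (BS.affineRep_conj hq a k 0).trans (zero_add _)
end

section
/- Let I be a finite index set with at least two elements, and for each i ∈ I let m_i, n_i be nonzero integers. Let G be the presented group with generators x and t_i (i ∈ I) and relations t_i⁻¹ x^{m_i} t_i = x^{n_i} for all i ∈ I. Then G is residually finite if and only if |m_i| = |n_i| for all i ∈ I. -/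
/-- The relators `t_i⁻¹ x^{m_i} t_i x^{-n_i}` (for `i ∈ I`) in the free group on the
generators `x` (encoded as `none`) and `t_i` (encoded as `some i`). -/
def multiLoopRels {I : Type} (m n : I → ℤ) : Set (FreeGroup (Option I)) :=
  Set.range fun i : I =>
    (FreeGroup.of (some i))⁻¹ * (FreeGroup.of none) ^ (m i) * FreeGroup.of (some i) *
      (FreeGroup.of none) ^ (-(n i))

/-! ### Finite groups satisfying the relations -/

/-- In a finite group where `xᵐ` and `xⁿ` are conjugate, `p^(E+1) ∣ m` and `p^(E+1) ∤ n`, the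
`p`-part of the order of `x` divides `p^E`; so `x^{p^E}` is a power of `x^{p^K}` for every `K`. -/
theorem fin_zpow_eq {H : Type} [Group H] [Finite H] {p E : ℕ} (hp : p.Prime) {m n : ℤ}
    {x s : H} (hs : s⁻¹ * x ^ m * s = x ^ n) (hE : ((p ^ (E + 1) : ℕ) : ℤ) ∣ m)
    (hn : ¬ ((p ^ (E + 1) : ℕ) : ℤ) ∣ n) (K : ℕ) :
    ∃ β : ℤ, x ^ ((p : ℤ) ^ E) = x ^ ((p : ℤ) ^ K * β) := by
  have hN : ¬ p ^ (E + 1) ∣ orderOf x := by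
    rintro ⟨N, hN⟩
    obtain ⟨m₁, rfl⟩ := hE
    have h1 : x ^ ((p ^ (E + 1) : ℕ) * m₁ * N) = 1 := by
      rw [← orderOf_dvd_iff_zpow_eq_one, hN]
      exact ⟨m₁, by push_cast; ring⟩
    have h2 : x ^ (n * N) = 1 := by
      rw [zpow_mul, ← hs]
      have := conj_zpow (i := (N : ℤ)) (a := s⁻¹) (b := x ^ (((p ^ (E + 1) : ℕ) : ℤ) * m₁))
      rw [inv_inv] at this
      rw [this, ← zpow_mul, h1]
      simp
    rw [← orderOf_dvd_iff_zpow_eq_one, hN] at h2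
    have hN0 : (N : ℤ) ≠ 0 := by
      rintro h
      have : N = 0 := by exact_mod_cast h
      rw [this, mul_zero] at hN
      exact (orderOf_pos x).ne' hN
    push_cast at h2 hn
    exact hn (Int.dvd_of_mul_dvd_mul_right hN0 h2)
  obtain ⟨f, -, hf⟩ := (Nat.dvd_prime_pow hp).1 (Nat.gcd_dvd_right (orderOf x) (p ^ K))
  have hfE : f ≤ E := by
    by_contra! h
    exact hN ((pow_dvd_pow p h).trans (hf ▸ Nat.gcd_dvd_left _ _))
  have hb := Nat.gcd_eq_gcd_ab (orderOf x) (p ^ K)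
  refine ⟨Nat.gcdB (orderOf x) (p ^ K) * p ^ (E - f), ?_⟩
  rw [← orderOf_dvd_sub_iff_zpow_eq_zpow]
  refine ⟨Nat.gcdA (orderOf x) (p ^ K) * p ^ (E - f), ?_⟩
  have h3 : (p : ℤ) ^ E = p ^ f * p ^ (E - f) := by rw [← pow_add]; congr 1; omega
  rw [hf] at hb
  push_cast at hb
  rw [h3, hb]
  ring

open scoped commutatorElement

/-- The commutator of `s⁻¹ xᵃ s` and `r⁻¹ s⁻¹ xᵃᶜ s r`. -/
def loopComm {G : Type*} [Group G] (x s r : G) (a c : ℤ) : G :=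
  ⁅s⁻¹ * x ^ a * s, r⁻¹ * (s⁻¹ * x ^ (a * c) * s) * r⁆

theorem map_loopComm {G K : Type*} [Group G] [Group K] (f : G →* K) (x s r : G) (a c : ℤ) :
    f (loopComm x s r a c) = loopComm (f x) (f s) (f r) a c := by
  simp [loopComm, map_commutatorElement]

/-- The commutator that witnesses the failure of residual finiteness dies in every finite
group: both of its entries are powers of `x` there. -/
theorem fin_loopComm {H : Type} [Group H] [Finite H] {p E k l : ℕ} (hp : p.Prime)
    {m n m' mj nj c : ℤ} {x s r : H} (hs : s⁻¹ * x ^ m * s = x ^ n)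
    (hr : r⁻¹ * x ^ mj * r = x ^ nj) (hE : ((p ^ (E + 1) : ℕ) : ℤ) ∣ m)
    (hn : ¬ ((p ^ (E + 1) : ℕ) : ℤ) ∣ n) (hm : m = (p : ℤ) ^ k * m')
    (hmj : mj = (p : ℤ) ^ l * c) : loopComm x s r ((p : ℤ) ^ E * m') c = 1 := by
  have hs' : ∀ b : ℤ, s⁻¹ * x ^ (m * b) * s = x ^ (n * b) := fun b => by
    have := conj_zpow (i := b) (a := s⁻¹) (b := x ^ m)
    rw [inv_inv] at this
    rw [zpow_mul, zpow_mul x n, ← hs, this]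
  have hr' : ∀ b : ℤ, r⁻¹ * x ^ (mj * b) * r = x ^ (nj * b) := fun b => by
    have := conj_zpow (i := b) (a := r⁻¹) (b := x ^ mj)
    rw [inv_inv] at this
    rw [zpow_mul, zpow_mul x nj, ← hr, this]
  obtain ⟨β, hβ⟩ := fin_zpow_eq hp hs hE hn k
  obtain ⟨γ, hγ⟩ := fin_zpow_eq hp hs hE hn (k + l)
  have h1 : x ^ ((p : ℤ) ^ E * m') = x ^ (m * β) := by
    rw [zpow_mul, hβ, ← zpow_mul, hm]; congr 1; ring
  have h2 : x ^ ((p : ℤ) ^ E * m' * c) = x ^ (m * (mj * γ)) := by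
    rw [mul_assoc, zpow_mul, hγ, ← zpow_mul, hm, hmj]; congr 1; ring
  have h3 : n * (mj * γ) = mj * (n * γ) := by ring
  rw [loopComm, h1, h2, hs', hs', h3, hr', commutatorElement_eq_one_iff_commute]
  exact (Commute.refl x).zpow_zpow _ _

/-! ### A nontrivial commutator, by Britton's lemma -/

/-- The relations of the group hold in some group in which `loopComm x t_i t_j a c` is nontrivial.
The base group is `Perm ℚ × ℤ`: `x` is translation by `1`, and `t_k` for `k ≠ i` is multiplication
by `m_k / n_k`, with second coordinate `1` so that it lies outside `⟨x⟩` even when `m_k = n_k`.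
Then `t_i` is the stable letter of an HNN extension. -/
theorem exists_hnn {I : Type} (m n : I → ℤ) (hm : ∀ i, m i ≠ 0) (hn : ∀ i, n i ≠ 0)
    {i j : I} (hij : i ≠ j) {a c : ℤ} (hac : ¬ m i ∣ a * c) :
    ∃ (K : Type) (_ : Group K) (x : K) (t : I → K),
      (∀ k, (t k)⁻¹ * x ^ m k * t k = x ^ n k) ∧ loopComm x (t i) (t j) a c ≠ 1 := by
  classical
  let X : Equiv.Perm ℚ × Multiplicative ℤ := (Equiv.addRight 1, 1)
  let b : I → Equiv.Perm ℚ × Multiplicative ℤ := fun k =>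
    (Equiv.mulLeft₀ ((m k : ℚ) / n k) (div_ne_zero (by exact_mod_cast hm k)
      (by exact_mod_cast hn k)), Multiplicative.ofAdd 1)
  have hX : ∀ z : ℤ, X ^ z = (Equiv.addRight (z : ℚ), 1) := fun z => by
    simp [X]
  have hb : ∀ k, (b k)⁻¹ * X ^ m k * b k = X ^ n k := fun k => by
    have h1 : (m k : ℚ) ≠ 0 := by exact_mod_cast hm k
    have h2 : (n k : ℚ) ≠ 0 := by exact_mod_cast hn k
    rw [mul_assoc, inv_mul_eq_iff_eq_mul, hX, hX]
    refine Prod.ext ?_ ?_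
    · ext q
      simp [b]
      field_simp
    · simp [b]
  have hinj : ∀ z w : ℤ, X ^ z = X ^ w → z = w := fun z w h => by
    rw [hX, hX] at h
    have := congrArg (fun e => e.1 (0 : ℚ)) h
    simpa using this
  -- Mathlib's stable letter conjugates `A` to `B`, so `A` is generated by `x^{n_i}` and `B` by
  -- `x^{m_i}`.
  let A : Subgroup (Equiv.Perm ℚ × Multiplicative ℤ) := Subgroup.zpowers (X ^ n i)
  let P := Equiv.Perm ℚ × Multiplicative ℤ
  let cj : P ≃* P := MulAut.conj (b i)
  have hcj : ∀ z, cj z = b i * z * (b i)⁻¹ := fun z => rfl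
  have hcjX : cj (X ^ n i) = X ^ m i := by
    rw [hcj, ← hb i]
    simp [mul_assoc]
  let B : Subgroup P := A.map (cj : P →* P)
  let φ : A ≃* B := cj.subgroupMap A
  have hB : ∀ z : ℤ, X ^ z ∈ B → m i ∣ z := by
    rintro z ⟨_, ⟨w, rfl⟩, h⟩
    refine ⟨w, hinj _ _ ?_⟩
    rw [← h, zpow_mul, ← hcjX, ← map_zpow]
    rfl
  have hA : ∀ z : Equiv.Perm ℚ × Multiplicative ℤ, z ∈ A → z.2 = 1 := by
    rintro _ ⟨w, rfl⟩
    simp [X]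
  have hbj : b j ∉ A := fun h => by
    have := hA _ h
    simp [b] at this
  have hac' : X ^ (a * c) ∉ B := fun h => hac (hB _ h)
  have ha' : X ^ a ∉ B := fun h => hac ((hB _ h).mul_right _)
  let T : HNNExtension P A B φ := HNNExtension.t
  let t : I → HNNExtension P A B φ := fun k => if k = i then T else HNNExtension.of (b k)
  refine ⟨HNNExtension P A B φ, inferInstance, HNNExtension.of X, t, ?_, ?_⟩
  · intro k
    by_cases hk : k = i
    · subst hk
      simp only [t, if_true]
      have h1 := HNNExtension.t_mul_of (φ := φ) ⟨X ^ n k, Subgroup.mem_zpowers _⟩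
      have h2 : ((φ ⟨X ^ n k, Subgroup.mem_zpowers _⟩ : B) : P) = X ^ m k := hcjX
      rw [h2] at h1
      rw [mul_assoc, inv_mul_eq_iff_eq_mul, ← map_zpow, ← map_zpow]
      exact h1.symm
    · simp only [t, if_neg hk]
      rw [← map_zpow, ← map_zpow, ← map_inv, ← map_mul, ← map_mul, hb]
  · intro h
    let w : HNNExtension.NormalWord.ReducedWord P A B :=
      { head := 1
        toList := [(-1, X ^ a), (1, (b j)⁻¹), (-1, X ^ (a * c)), (1, b j),
          (-1, (X ^ a)⁻¹), (1, (b j)⁻¹), (-1, (X ^ (a * c))⁻¹), (1, b j)]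
        chain := by
          have inv_nmem : ∀ {D : Subgroup P} {z : P}, z ∉ D → z⁻¹ ∉ D :=
            fun h h' => h (inv_mem_iff.1 h')
          simp [ha', hac', hbj, inv_nmem ha', inv_nmem hac', inv_nmem hbj] }
    have hw : w.prod φ = 1 := by
      rw [← h]
      simp [w, HNNExtension.NormalWord.ReducedWord.prod, t, loopComm, hij.symm,
        commutatorElement_def, T, mul_assoc]
    have := HNNExtension.ReducedWord.toList_eq_nil_of_mem_of_range φ w (hw ▸ one_mem _)
    simp [w] at this

/-! ### Divisibility from residual finiteness -/

/-- The divisibility forced by residual finiteness, for a group `G` that is mapping-out universal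
for the relations (`hlift`). This form applies both to the stable letters and to their
inverses. -/
theorem dvd_of_rf {I : Type} {G : Type*} [Group G] (hG : IsResiduallyFinite G) {m n : I → ℤ}
    (hm : ∀ i, m i ≠ 0) (hn : ∀ i, n i ≠ 0) {x : G} {t : I → G}
    (ht : ∀ k, (t k)⁻¹ * x ^ m k * t k = x ^ n k)
    (hlift : ∀ (K : Type) [Group K] (x' : K) (t' : I → K),
      (∀ k, (t' k)⁻¹ * x' ^ m k * t' k = x' ^ n k) → ∃ f : G →* K, f x = x' ∧ ∀ k, f (t k) = t' k)
    {i j : I} (hij : i ≠ j) : m i ∣ n i := by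
  by_contra hmn
  rw [← Int.natAbs_dvd_natAbs, Nat.dvd_iff_prime_pow_dvd_dvd] at hmn
  push Not at hmn
  obtain ⟨p, E, hp, hpm, hpn⟩ := hmn
  obtain _ | E := E
  · simp at hpn
  rw [← Int.natCast_dvd] at hpm hpn
  have hp' : Prime (p : ℤ) := Nat.prime_iff_prime_int.1 hp
  have hfac : ∀ z : ℤ, z ≠ 0 → ∃ (k : ℕ) (z' : ℤ), z = (p : ℤ) ^ k * z' ∧ ¬ (p : ℤ) ∣ z' :=
    fun z hz => ⟨_, (FiniteMultiplicity.of_prime_left hp' hz).exists_eq_pow_mul_and_not_dvd⟩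
  obtain ⟨k, m', hkm, hm'⟩ := hfac _ (hm i)
  obtain ⟨l, c, hlc, hc⟩ := hfac _ (hm j)
  have hac : ¬ m i ∣ (p : ℤ) ^ E * m' * c := by
    intro h
    have h1 : (p : ℤ) ^ (E + 1) ∣ p ^ E * (m' * c) := by
      rw [← mul_assoc]; exact_mod_cast hpm.trans h
    rw [pow_succ] at h1
    have h2 := Int.dvd_of_mul_dvd_mul_left (pow_ne_zero E hp'.ne_zero) h1
    exact (hp'.dvd_or_dvd h2).elim hm' hc
  obtain ⟨K, _, x', t', ht', hne⟩ := exists_hnn m n hm hn hij hac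
  obtain ⟨f, hfx, hft⟩ := hlift K x' t' ht'
  obtain ⟨H, _, _, g, hg⟩ := hG (loopComm x (t i) (t j) ((p : ℤ) ^ E * m') c) fun h => hne <| by
    rw [← hfx, ← hft, ← hft, ← map_loopComm, h, map_one]
  have hrel : ∀ k, (g (t k))⁻¹ * g x ^ m k * g (t k) = g x ^ n k := fun k => by
    simp only [← map_zpow, ← map_inv, ← map_mul, ht]
  refine hg ?_
  rw [map_loopComm]
  exact fin_loopComm hp (hrel i) (hrel j) hpm hpn hkm hlc

/-! ### Extending partial translations to permutations of a finite set -/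

/-- Two finite sets of the same cardinality that are invariant under left multiplication by a
finite subgroup `C` are `C`-equivariantly in bijection, because `C` acts freely. The map `f` is
built orbit by orbit; it is equivariant on all of `Q`, and right multiplication by `a⁻¹ b`
carries the orbit `C a` to the orbit `C b`. -/
theorem exists_equivariant {Q : Type*} [Group Q] (C : Subgroup Q) [Finite C] :
    ∀ (N : ℕ) (A B : Set Q), A.Finite → B.Finite → A.ncard = N → B.ncard = N →
      (∀ c ∈ C, ∀ q ∈ A, c * q ∈ A) → (∀ c ∈ C, ∀ q ∈ B, c * q ∈ B) →
      ∃ f : Q → Q, (∀ c ∈ C, ∀ q, f (c * q) = c * f q) ∧ Set.MapsTo f A B ∧ Set.InjOn f A := by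
  classical
  intro N
  induction N using Nat.strong_induction_on with
  | _ N ih =>
    intro A B hAf hBf hAN hBN hA hB
    rcases A.eq_empty_or_nonempty with rfl | ⟨a, ha⟩
    · exact ⟨id, fun _ _ _ => rfl, fun _ h => h.elim, Set.injOn_empty _⟩
    have hN : N ≠ 0 := by
      rw [← hAN]; exact (Set.ncard_pos hAf).2 ⟨a, ha⟩ |>.ne'
    obtain ⟨b, hb⟩ : B.Nonempty := by
      rw [← Set.ncard_pos hBf, hBN]; omega
    let orb : Q → Set Q := fun q => (fun c => c * q) '' (C : Set Q)
    have horb : ∀ q, (orb q).ncard = Nat.card C := fun q => by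
      rw [Set.ncard_image_of_injective _ (mul_left_injective q)]; rfl
    have hmem : ∀ q y, y ∈ orb q ↔ y * q⁻¹ ∈ C := fun q y => by
      constructor
      · rintro ⟨c, hc, rfl⟩; simpa using hc
      · intro h; exact ⟨_, h, by simp⟩
    have hinv : ∀ q, ∀ c ∈ C, ∀ y, c * y ∈ orb q ↔ y ∈ orb q := fun q c hc y => by
      rw [hmem, hmem, mul_assoc, C.mul_mem_cancel_left hc]
    have hsA : orb a ⊆ A := by rintro _ ⟨c, hc, rfl⟩; exact hA c hc a ha
    have hsB : orb b ⊆ B := by rintro _ ⟨c, hc, rfl⟩; exact hB c hc b hb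
    have hcC : 0 < Nat.card C := Nat.card_pos
    have hdA := Set.ncard_sdiff hsA (hAf.subset hsA)
    have hdB := Set.ncard_sdiff hsB (hBf.subset hsB)
    rw [horb, hAN] at hdA
    rw [horb, hBN] at hdB
    obtain ⟨f, hf, hfm, hfi⟩ := ih (N - Nat.card C) (by omega) (A \ orb a) (B \ orb b)
      hAf.sdiff hBf.sdiff hdA hdB
      (fun c hc q hq => ⟨hA c hc q hq.1, fun h => hq.2 ((hinv a c hc q).1 h)⟩)
      (fun c hc q hq => ⟨hB c hc q hq.1, fun h => hq.2 ((hinv b c hc q).1 h)⟩)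
    have hab : ∀ q ∈ orb a, q * a⁻¹ * b ∈ orb b := fun q hq => by
      rw [hmem] at hq ⊢; simpa using hq
    refine ⟨fun q => if q ∈ orb a then q * a⁻¹ * b else f q, ?_, ?_, ?_⟩
    · intro c hc q
      simp only [hinv a c hc q]
      split_ifs
      · simp [mul_assoc]
      · exact hf c hc q
    · intro q hq
      by_cases h : q ∈ orb a
      · simp only [if_pos h]; exact hsB (hab q h)
      · simp only [if_neg h]; exact (hfm ⟨hq, h⟩).1
    · intro q hq q' hq' e
      by_cases h : q ∈ orb a <;> by_cases h' : q' ∈ orb a <;>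
        simp only [h, h', if_true, if_false] at e
      · simpa using e
      · exact absurd (e ▸ hab q h) (hfm ⟨hq', h'⟩).2
      · exact absurd (e.symm ▸ hab q' h') (hfm ⟨hq, h⟩).2
      · exact hfi ⟨hq, h⟩ ⟨hq', h'⟩ e

/-- If `t` conjugates `v` to `u` and `S` is a finite set invariant under left multiplication by
`⟨u⟩` and `⟨v⟩`, then left multiplication by `t`, restricted to those `q ∈ S` with `t q ∈ S`,
extends to a permutation of `S` that intertwines `v` and `u`. -/
theorem exists_extension {Q : Type*} [Group Q] {t u v : Q} (htv : t * v = u * t)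
    [Finite (Subgroup.zpowers v)] {S : Set Q} (hS : S.Finite)
    (hvS : ∀ c ∈ Subgroup.zpowers v, ∀ q ∈ S, c * q ∈ S)
    (huS' : ∀ c ∈ Subgroup.zpowers u, ∀ q ∈ S, c * q ∈ S) :
    ∃ τ : Equiv.Perm S, (∀ (q : S) (h : t * q ∈ S), τ q = ⟨t * q, h⟩) ∧
      ∀ q q' : S, (q' : Q) = v * q → (τ q' : Q) = u * τ q := by
  classical
  -- An equivariant bijection `g : S → T` with `T = t⁻¹ S`, fixing `S ∩ T`, gives the
  -- permutation `q ↦ t * g q`; only `S \ T` and `T \ S` have to be matched.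
  let T : Set Q := (fun q => t⁻¹ * q) '' S
  have hTf : T.Finite := hS.image _
  have hT : ∀ q, q ∈ T ↔ t * q ∈ S := fun q => by
    constructor
    · rintro ⟨s, hs, rfl⟩; simpa using hs
    · intro h; exact ⟨_, h, by simp⟩
  have hconj : ∀ k : ℤ, t * v ^ k = u ^ k * t := fun k => by
    have : u = t * v * t⁻¹ := by rw [htv]; simp
    rw [this, conj_zpow]; simp
  have hvT : ∀ c ∈ Subgroup.zpowers v, ∀ q ∈ T, c * q ∈ T := by
    rintro _ ⟨k, rfl⟩ q hq
    rw [hT] at hq ⊢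
    change t * (v ^ k * q) ∈ S
    rw [← mul_assoc, hconj, mul_assoc]
    exact huS' _ ⟨k, rfl⟩ _ hq
  have hinvS : ∀ c ∈ Subgroup.zpowers v, ∀ q, c * q ∈ S ↔ q ∈ S := fun c hc q =>
    ⟨fun h => by simpa using hvS _ (inv_mem hc) _ h, hvS c hc q⟩
  have hinvT : ∀ c ∈ Subgroup.zpowers v, ∀ q, c * q ∈ T ↔ q ∈ T := fun c hc q =>
    ⟨fun h => by simpa using hvT _ (inv_mem hc) _ h, hvT c hc q⟩
  have hcard : T.ncard = S.ncard := Set.ncard_image_of_injective _ (mul_right_injective _)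
  have h1 := Set.ncard_inter_add_ncard_sdiff_eq_ncard S T hS
  have h2 := Set.ncard_inter_add_ncard_sdiff_eq_ncard T S hTf
  rw [Set.inter_comm] at h2
  obtain ⟨f, hf, hfm, hfi⟩ := exists_equivariant (Subgroup.zpowers v) _ (S \ T) (T \ S)
    hS.sdiff hTf.sdiff rfl (by omega)
    (fun c hc q hq => ⟨hvS c hc q hq.1, fun h => hq.2 ((hinvT c hc q).1 h)⟩)
    (fun c hc q hq => ⟨hvT c hc q hq.1, fun h => hq.2 ((hinvS c hc q).1 h)⟩)
  let g : Q → Q := fun q => if q ∈ T then q else f q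
  have hgT : ∀ q ∈ S, g q ∈ T := fun q hq => by
    by_cases h : q ∈ T
    · simp [g, h]
    · simpa [g, h] using (hfm ⟨hq, h⟩).1
  have hgi : Set.InjOn g S := by
    intro q hq q' hq' e
    by_cases h : q ∈ T <;> by_cases h' : q' ∈ T <;>
      simp only [g, h, h', if_true, if_false] at e
    · exact e
    · exact absurd (e ▸ hq) (hfm ⟨hq', h'⟩).2
    · exact absurd (e.symm ▸ hq') (hfm ⟨hq, h⟩).2
    · exact hfi ⟨hq, h⟩ ⟨hq', h'⟩ e
  have : Finite S := hS
  let τ₀ : S → S := fun q => ⟨t * g q, (hT _).1 (hgT q q.2)⟩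
  have hτ : Function.Injective τ₀ := fun q q' e => by
    have e' : t * g q = t * g q' := congrArg Subtype.val e
    exact Subtype.ext (hgi q.2 q'.2 (mul_left_cancel e'))
  refine ⟨Equiv.ofBijective τ₀ (Finite.injective_iff_bijective.1 hτ), ?_, ?_⟩
  · intro q h
    have : (q : Q) ∈ T := (hT _).2 h
    simp [τ₀, g, this]
  · intro q q' h
    have hv : v ∈ Subgroup.zpowers v := Subgroup.mem_zpowers v
    have hg : g (v * q) = v * g q := by
      simp only [g, hinvT v hv]
      split_ifs
      · rfl
      · exact hf v hv q
    simp only [Equiv.ofBijective_apply, τ₀, h, hg]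
    rw [← mul_assoc, htv, mul_assoc]

/-- If a permutation representation of a free group on `S ⊆ Q` agrees on generators with left
multiplication wherever the latter stays inside `S`, and `S` contains a suitable finite set
depending on `w` and `q`, then `w` acts on `q` by left multiplication. -/
theorem track {α : Type*} {Q : Type*} [Group Q] (π : FreeGroup α →* Q) (w : FreeGroup α) :
    ∀ q : Q, ∃ S₀ : Set Q, S₀.Finite ∧ ∀ S : Set Q, S₀ ⊆ S → ∀ Φ : FreeGroup α →* Equiv.Perm S,
      (∀ l (q : S) (h : π (.of l) * q ∈ S), Φ (.of l) q = ⟨π (.of l) * q, h⟩) →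
      ∀ h : q ∈ S, (Φ w ⟨q, h⟩ : Q) = π w * q := by
  induction w using FreeGroup.induction_on with
  | C1 => exact fun q => ⟨∅, Set.finite_empty, fun S _ Φ _ h => by simp⟩
  | of l =>
    intro q
    refine ⟨{π (.of l) * q}, Set.finite_singleton _, fun S hS Φ hΦ h => ?_⟩
    rw [hΦ l ⟨q, h⟩ (hS rfl)]
  | inv_of l _ =>
    intro q
    refine ⟨{(π (.of l))⁻¹ * q}, Set.finite_singleton _, fun S hS Φ hΦ h => ?_⟩
    have h' : (π (.of l))⁻¹ * q ∈ S := hS rfl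
    have := hΦ l ⟨_, h'⟩ (by simpa using h)
    have h2 : Φ (.of l) ⟨_, h'⟩ = ⟨q, h⟩ := by rw [this]; ext; simp
    rw [← h2, map_inv, map_inv]; simp
  | mul w₁ w₂ ih₁ ih₂ =>
    intro q
    obtain ⟨S₂, hf₂, h₂⟩ := ih₂ q
    obtain ⟨S₁, hf₁, h₁⟩ := ih₁ (π w₂ * q)
    refine ⟨S₁ ∪ S₂, hf₁.union hf₂, fun S hS Φ hΦ h => ?_⟩
    have e₂ := h₂ S (Set.subset_union_right.trans hS) Φ hΦ h
    have hm : π w₂ * q ∈ S := e₂ ▸ (Φ w₂ ⟨q, h⟩).2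
    have e₁ := h₁ S (Set.subset_union_left.trans hS) Φ hΦ hm
    have e₃ : Φ w₂ ⟨q, h⟩ = ⟨π w₂ * q, hm⟩ := Subtype.ext e₂
    rw [map_mul, Equiv.Perm.mul_apply, e₃, e₁, map_mul, mul_assoc]

/-! ### Residual finiteness in the unimodular case -/

theorem lift_rels {I : Type} {m n : I → ℤ} {K : Type*} [Group K] {f : Option I → K}
    (h : ∀ i, (f (some i))⁻¹ * f none ^ m i * f (some i) = f none ^ n i) :
    ∀ r ∈ multiLoopRels m n, FreeGroup.lift f r = 1 := by
  rintro _ ⟨i, rfl⟩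
  simp [h]

theorem gen_rel {I : Type} (m n : I → ℤ) (i : I) :
    (PresentedGroup.of (some i) : PresentedGroup (multiLoopRels m n))⁻¹ *
      (PresentedGroup.of none) ^ m i * PresentedGroup.of (some i) =
      (PresentedGroup.of none) ^ n i := by
  have : PresentedGroup.mk (multiLoopRels m n) _ = 1 :=
    PresentedGroup.one_of_mem ⟨i, rfl⟩
  simp only [map_mul, map_inv, map_zpow, zpow_neg] at this
  exact mul_inv_eq_one.1 this

/-- Elements surviving in a quotient where `x` has finite order are detected by finite groups. -/
theorem detect_quotient {I : Type} {m n : I → ℤ} {Q : Type} [Group Q]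
    (ρ : PresentedGroup (multiLoopRels m n) →* Q) (hx : IsOfFinOrder (ρ (.of none)))
    {g : PresentedGroup (multiLoopRels m n)} (hg : ρ g ≠ 1) :
    ∃ (H : Type) (_ : Group H) (_ : Finite H)
      (f : PresentedGroup (multiLoopRels m n) →* H), f g ≠ 1 := by
  obtain ⟨w, rfl⟩ := PresentedGroup.mk_surjective _ g
  set x := ρ (.of none) with hxdef
  let t : I → Q := fun i => ρ (.of (some i))
  have hrel : ∀ i, t i * x ^ n i = x ^ m i * t i := fun i => by
    have := congrArg ρ (gen_rel m n i)
    simp only [map_mul, map_inv, map_zpow] at this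
    rw [← this]; simp [t, mul_assoc, hxdef]
  obtain ⟨S₀, hf₀, hS₀⟩ := track (ρ.comp (PresentedGroup.mk _)) w 1
  have hfin : Set.Finite (Subgroup.zpowers x : Set Q) := hx.finite_zpowers
  let S : Set Q := Set.image2 (· * ·) (Subgroup.zpowers x : Set Q) (insert 1 S₀)
  have hSf : S.Finite := hfin.image2 _ (hf₀.insert 1)
  have hsub : insert 1 S₀ ⊆ S := fun q hq => ⟨1, one_mem _, q, hq, one_mul q⟩
  have hxS : ∀ c ∈ Subgroup.zpowers x, ∀ q ∈ S, c * q ∈ S := by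
    rintro c hc _ ⟨d, hd, q, hq, rfl⟩
    exact ⟨c * d, mul_mem hc hd, q, hq, mul_assoc _ _ _⟩
  have hle : ∀ k : ℤ, Subgroup.zpowers (x ^ k) ≤ Subgroup.zpowers x := fun k =>
    Subgroup.zpowers_le.2 ⟨k, rfl⟩
  have hx1 : x ∈ Subgroup.zpowers x := Subgroup.mem_zpowers x
  let X : Equiv.Perm S :=
    { toFun := fun q => ⟨x * q, hxS _ hx1 _ q.2⟩
      invFun := fun q => ⟨x⁻¹ * q, hxS _ (inv_mem hx1) _ q.2⟩
      left_inv := fun q => by simp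
      right_inv := fun q => by simp }
  have hX : ∀ (k : ℤ) (q : S), ((X ^ k) q : Q) = x ^ k * q := by
    intro k
    induction k using Int.induction_on with
    | zero => simp
    | succ k ih => intro q; rw [zpow_add_one, Equiv.Perm.mul_apply, ih, zpow_add_one]; simp [X, mul_assoc]
    | pred k ih =>
      intro q
      have h1 : ((X⁻¹ q : S) : Q) = x⁻¹ * q := rfl
      rw [zpow_sub_one, Equiv.Perm.mul_apply, ih, zpow_sub_one, h1, mul_assoc]
  have hτ : ∀ i, ∃ τ : Equiv.Perm S, (∀ (q : S) (h : t i * q ∈ S), τ q = ⟨t i * q, h⟩) ∧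
      ∀ q q' : S, (q' : Q) = x ^ n i * q → (τ q' : Q) = x ^ m i * τ q := fun i => by
    have : Finite (Subgroup.zpowers (x ^ n i)) := hfin.subset (hle _)
    exact exists_extension (hrel i) hSf
      (fun c hc => hxS c (hle _ hc)) (fun c hc => hxS c (hle _ hc))
  choose τ hτ1 hτ2 using hτ
  let F : Option I → Equiv.Perm S := fun o => o.elim X τ
  have hF : ∀ r ∈ multiLoopRels m n, FreeGroup.lift F r = 1 := lift_rels fun i => by
    rw [mul_assoc, inv_mul_eq_iff_eq_mul]
    ext q
    simp only [Equiv.Perm.mul_apply, F, Option.elim]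
    rw [hX, hτ2 i q _ (hX _ _)]
  have : Finite S := hSf
  refine ⟨Equiv.Perm S, inferInstance, inferInstance, PresentedGroup.toGroup hF, fun h => hg ?_⟩
  have key := hS₀ S ((Set.subset_insert _ _).trans hsub) (FreeGroup.lift F)
    (by
      rintro (_ | i) q h
      · simp [F, X, hxdef]; rfl
      · rw [FreeGroup.lift_apply_of]; exact hτ1 i q h) (hsub (Set.mem_insert _ _))
  have h' : FreeGroup.lift F w = 1 := h
  rw [h'] at key
  simpa using key.symm

/-- Nonzero powers of `x` are detected by the action on `ZMod (|k| + 1)` in which `x` is the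
translation by `1` and `t_i` is `1` or negation. -/
theorem detect_power {I : Type} {m n : I → ℤ} (hmn : ∀ i, |m i| = |n i|) {k : ℤ} (hk : k ≠ 0) :
    ∃ (H : Type) (_ : Group H) (_ : Finite H)
      (f : PresentedGroup (multiLoopRels m n) →* H), f (.of none ^ k) ≠ 1 := by
  classical
  let L := k.natAbs + 1
  let F : Option I → Equiv.Perm (ZMod L) := fun o => o.elim (Equiv.addRight 1)
    fun i => if m i = n i then 1 else Equiv.neg _
  have hF : ∀ r ∈ multiLoopRels m n, FreeGroup.lift F r = 1 := lift_rels fun i => by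
    rw [mul_assoc, inv_mul_eq_iff_eq_mul]
    by_cases h : m i = n i
    · simp [F, h]
    · have h' : m i = - n i := (abs_eq_abs.1 (hmn i)).resolve_left h
      ext q
      have hne : ¬ -n i = n i := h' ▸ h
      simp [F, h', hne, add_comm]
  refine ⟨Equiv.Perm (ZMod L), inferInstance, inferInstance, PresentedGroup.toGroup hF,
    fun h => ?_⟩
  rw [map_zpow, PresentedGroup.toGroup.of] at h
  have := congrArg (fun e => e (0 : ZMod L)) h
  simp [F] at this
  rw [ZMod.intCast_zmod_eq_zero_iff_dvd] at this
  refine hk (Int.eq_zero_of_abs_lt_dvd this ?_)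
  rw [Int.abs_eq_natAbs]
  simp [L]

theorem rf_of_abs_eq {I : Type} [Finite I] {m n : I → ℤ} (hm : ∀ i, m i ≠ 0)
    (hmn : ∀ i, |m i| = |n i|) : IsResiduallyFinite (PresentedGroup (multiLoopRels m n)) := by
  classical
  have := Fintype.ofFinite I
  intro g hg
  let G := PresentedGroup (multiLoopRels m n)
  let x : G := .of none
  let M : ℤ := ∏ i, m i
  have hM : M ≠ 0 := Finset.prod_ne_zero_iff.2 fun i _ => hm i
  let N : Subgroup G := Subgroup.zpowers (x ^ M)
  have hN : N.Normal := by
    rw [← Subgroup.normalizer_eq_top_iff, eq_top_iff, ← PresentedGroup.closure_range_of,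
      Subgroup.closure_le]
    have hz : ∀ (t : G) (y : G), (t⁻¹ * y * t = y ∨ t⁻¹ * y * t = y⁻¹) →
        t ∈ Subgroup.normalizer (Subgroup.zpowers y : Set G) := by
      intro t y h
      -- The hypothesis on `t⁻¹ * y * t` is about conjugation by `t⁻¹`.
      rw [← inv_mem_iff, Subgroup.mem_normalizer_iff_map_conj_eq, MonoidHom.map_zpowers]
      rcases h with h | h <;> simp [h]
    rintro _ ⟨_ | i, rfl⟩
    · refine hz _ _ (Or.inl ?_)
      change x⁻¹ * x ^ M * x = x ^ M
      group
    · apply hz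
      obtain ⟨c, hc⟩ : m i ∣ M := Finset.dvd_prod_of_mem m (Finset.mem_univ i)
      have h1 : (PresentedGroup.of (some i) : G)⁻¹ * x ^ M * .of (some i) = x ^ (n i * c) := by
        have := conj_zpow (i := c) (a := (PresentedGroup.of (some i) : G)⁻¹) (b := x ^ m i)
        rw [inv_inv] at this
        rw [hc, zpow_mul, ← this, gen_rel, zpow_mul]
      rw [h1]
      rcases abs_eq_abs.1 (hmn i) with h | h
      · left; rw [hc, h]
      · right; rw [hc, h, ← zpow_neg]; congr 1; ring
  by_cases hgN : g ∈ N
  · obtain ⟨k, rfl⟩ := hgN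
    have hk : M * k ≠ 0 := by
      refine mul_ne_zero hM ?_
      rintro rfl
      simp at hg
    have := detect_power hmn hk
    rwa [zpow_mul] at this
  · refine detect_quotient (QuotientGroup.mk' N) ?_ (g := g) ?_
    · rw [isOfFinOrder_iff_zpow_eq_one]
      refine ⟨M, hM, ?_⟩
      rw [← map_zpow]
      exact (QuotientGroup.eq_one_iff _).2 (Subgroup.mem_zpowers _)
    · exact fun h => hgN ((QuotientGroup.eq_one_iff _).1 h)

/-! ### The equivalence -/

/-- The GBS group `⟨x, (t_i)_{i∈I} ∣ t_i⁻¹ x^{m_i} t_i = x^{n_i}, i ∈ I⟩` with `|I| ≥ 2`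
is residually finite iff `|m_i| = |n_i|` for all `i`. -/
theorem multiLoop_residuallyFinite_iff (I : Type) [Finite I] (hI : 2 ≤ Nat.card I)
    (m n : I → ℤ) (hm : ∀ i, m i ≠ 0) (hn : ∀ i, n i ≠ 0) :
    IsResiduallyFinite (PresentedGroup (multiLoopRels m n)) ↔ ∀ i, |m i| = |n i| := by
  refine ⟨fun hG i => ?_, rf_of_abs_eq hm⟩
  have : Nontrivial I := Finite.one_lt_card_iff_nontrivial.1 hI
  obtain ⟨j, hij⟩ := exists_ne i
  have swap : ∀ {K : Type} [Group K] {x t : K} {a b : ℤ},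
      t⁻¹ * x ^ a * t = x ^ b → (t⁻¹)⁻¹ * x ^ b * t⁻¹ = x ^ a := fun h => by
    rw [← h]; simp [mul_assoc]
  have h1 : m i ∣ n i := dvd_of_rf hG hm hn (gen_rel m n)
    (fun K _ x' t' h => ⟨PresentedGroup.toGroup (lift_rels (f := fun o => o.elim x' t') h),
      by simp, by simp⟩) hij.symm
  have h2 : n i ∣ m i := dvd_of_rf hG hn hm (t := fun k => (.of (some k))⁻¹)
    (fun k => swap (gen_rel m n k))
    (fun K _ x' t' h => ⟨PresentedGroup.toGroup
      (lift_rels (f := fun o => o.elim x' fun k => (t' k)⁻¹) fun k => swap (h k)),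
      by simp, by simp⟩) hij.symm
  rw [Int.abs_eq_natAbs, Int.abs_eq_natAbs, Int.natAbs_eq_of_dvd_dvd h1 h2]
end

section
/- Let m, n be integers with |m| ≥ 2 and |n| ≥ 2. The presented group G = ⟨t, u, x ∣ t⁻¹ x t = x^n, u⁻¹ x u = x^m⟩ is not residually finite. -/
/-- The relators `t⁻¹ x t x^{-n}` and `u⁻¹ x u x^{-m}` in the free group on the three
generators `t = 0`, `u = 1`, `x = 2`. -/
def twoConjRels (m n : ℤ) : Set (FreeGroup (Fin 3)) :=
  {(FreeGroup.of 0)⁻¹ * FreeGroup.of 2 * FreeGroup.of 0 * (FreeGroup.of 2) ^ (-n),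
   (FreeGroup.of 1)⁻¹ * FreeGroup.of 2 * FreeGroup.of 1 * (FreeGroup.of 2) ^ (-m)}

theorem finite_conj_mem_zpowers {H : Type*} [Group H] [Finite H] {t x : H} {n : ℤ}
    (h : t⁻¹ * x * t = x ^ n) : t * x * t⁻¹ ∈ Subgroup.zpowers x := by
  have hle : Subgroup.zpowers (x ^ n) ≤ Subgroup.zpowers x := by
    rw [Subgroup.zpowers_le]
    exact Subgroup.zpow_mem_zpowers x n
  have hord : orderOf (x ^ n) = orderOf x := by
    rw [← h]
    simpa using (MulAut.conj t⁻¹).orderOf_eq x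
  have heq : Subgroup.zpowers (x ^ n) = Subgroup.zpowers x := by
    apply Subgroup.eq_of_le_of_card_ge hle
    rw [Nat.card_zpowers, Nat.card_zpowers, hord]
  have hx : x ∈ Subgroup.zpowers (x ^ n) := heq ▸ Subgroup.mem_zpowers x
  obtain ⟨k, hk⟩ := Subgroup.mem_zpowers_iff.1 hx
  refine Subgroup.mem_zpowers_iff.2 ⟨k, ?_⟩
  rw [← h] at hk
  have h2 : (t⁻¹ * x * t) ^ k = t⁻¹ * x ^ k * t := by
    simpa using conj_zpow (i := k) (a := t⁻¹) (b := x)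
  rw [h2] at hk
  calc x ^ k = t * (t⁻¹ * x ^ k * t) * t⁻¹ := by group
    _ = t * x * t⁻¹ := by rw [hk]

/-- Two elements of infinite order become conjugate in a larger group, namely the HNN extension
along the isomorphism between the infinite cyclic groups that they generate. -/
theorem exists_conj_embedding {K : Type} [Group K] (x y : K)
    (hx : Function.Injective fun k : ℤ => x ^ k) (hy : Function.Injective fun k : ℤ => y ^ k) :
    ∃ (L : Type) (_ : Group L) (f : K →* L) (t : L),
      Function.Injective f ∧ t * f x * t⁻¹ = f y := by
  have hx' : Function.Injective (zpowersHom K x) := fun a b hab => hx hab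
  have hy' : Function.Injective (zpowersHom K y) := fun a b hab => hy hab
  let ex := MonoidHom.ofInjective hx'
  let ey := MonoidHom.ofInjective hy'
  let φ := ex.symm.trans ey
  refine ⟨HNNExtension K _ _ φ, inferInstance, HNNExtension.of, HNNExtension.t,
    HNNExtension.of_injective φ, ?_⟩
  have key := HNNExtension.t_mul_of (φ := φ) (ex (Multiplicative.ofAdd 1))
  have h1 : ((ex (Multiplicative.ofAdd 1) : _) : K) = x := by
    exact (MonoidHom.ofInjective_apply hx').trans (by simp)
  have h2 : ((φ (ex (Multiplicative.ofAdd 1)) : _) : K) = y := by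
    simp only [φ, MulEquiv.trans_apply, MulEquiv.symm_apply_apply]
    exact (MonoidHom.ofInjective_apply hy').trans (by simp)
  rw [h1, h2] at key
  rw [key, mul_inv_cancel_right]

theorem exists_noncommuting_torsion (m n : ℤ) (hm : 2 ≤ |m|) (hn : 2 ≤ |n|) :
    ∃ (F : Type) (_ : Group F) (a b : F), a ^ n = 1 ∧ b ^ m = 1 ∧ a * b ≠ b * a := by
  have hN : 2 ≤ n.natAbs := by rw [Int.abs_eq_natAbs] at hn; exact_mod_cast hn
  have hM : 2 ≤ m.natAbs := by rw [Int.abs_eq_natAbs] at hm; exact_mod_cast hm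
  have : Fact (1 < n.natAbs) := ⟨hN⟩
  have : Fact (1 < m.natAbs) := ⟨hM⟩
  -- `a` shifts the first coordinate; `b` shifts the second one, but only over `0`.
  let a : Equiv.Perm (ZMod n.natAbs × ZMod m.natAbs) :=
    Equiv.prodCongr (Equiv.addRight 1) (Equiv.refl _)
  let b : Equiv.Perm (ZMod n.natAbs × ZMod m.natAbs) :=
    { toFun := fun p => (p.1, if p.1 = 0 then p.2 + 1 else p.2)
      invFun := fun p => (p.1, if p.1 = 0 then p.2 - 1 else p.2)
      left_inv := by
        rintro ⟨i, j⟩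
        by_cases h : i = 0 <;> simp [h]
      right_inv := by
        rintro ⟨i, j⟩
        by_cases h : i = 0 <;> simp [h] }
  have ha : ∀ (k : ℕ) p, (a ^ k) p = (p.1 + k, p.2) := by
    intro k
    induction k with
    | zero => simp
    | succ k ih =>
      intro p
      rw [pow_succ', Equiv.Perm.mul_apply, ih]
      simp [a, add_assoc]
  have hb : ∀ (k : ℕ) p, (b ^ k) p = (p.1, if p.1 = 0 then p.2 + k else p.2) := by
    intro k
    induction k with
    | zero => simp
    | succ k ih =>
      rintro ⟨i, j⟩
      rw [pow_succ', Equiv.Perm.mul_apply, ih]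
      by_cases h : i = 0 <;> simp [b, h, add_assoc]
  refine ⟨Equiv.Perm (ZMod n.natAbs × ZMod m.natAbs), inferInstance, a, b, ?_, ?_, ?_⟩
  · have : a ^ n.natAbs = 1 := by
      ext1 p
      simp [ha]
    rwa [← orderOf_dvd_iff_zpow_eq_one, ← Int.dvd_natAbs, Int.natCast_dvd_natCast,
      orderOf_dvd_iff_pow_eq_one]
  · have : b ^ m.natAbs = 1 := by
      ext1 p
      simp [hb]
    rwa [← orderOf_dvd_iff_zpow_eq_one, ← Int.dvd_natAbs, Int.natCast_dvd_natCast,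
      orderOf_dvd_iff_pow_eq_one]
  · intro h
    have := congrArg (fun e => (e (0, 0)).2) h
    simp [a, b] at this

theorem exists_noncommuting_roots (m n : ℤ) (hm : 2 ≤ |m|) (hn : 2 ≤ |n|) :
    ∃ (K : Type) (_ : Group K) (x y z : K),
      (Function.Injective fun k : ℤ => x ^ k) ∧ (Function.Injective fun k : ℤ => y ^ k) ∧
      (Function.Injective fun k : ℤ => z ^ k) ∧ y ^ n = x ∧ z ^ m = x ∧ y * z ≠ z * y := by
  obtain ⟨F, _, a, b, ha, hb, hab⟩ := exists_noncommuting_torsion m n hm hn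
  have hm0 : m ≠ 0 := by rintro rfl; simp at hm
  have hn0 : n ≠ 0 := by rintro rfl; simp at hn
  have inj : ∀ (c : ℤ) (g : F), c ≠ 0 → Function.Injective
      fun k : ℤ => ((Multiplicative.ofAdd c, g) : Multiplicative ℤ × F) ^ k := by
    intro c g hc k l hkl
    have h1 := congrArg (fun p => Multiplicative.toAdd p.1) hkl
    simpa [hc] using h1
  refine ⟨Multiplicative ℤ × F, inferInstance, (Multiplicative.ofAdd (m * n), 1),
    (Multiplicative.ofAdd m, a), (Multiplicative.ofAdd n, b), inj _ _ (mul_ne_zero hm0 hn0),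
    inj _ _ hm0, inj _ _ hn0, ?_, ?_, ?_⟩
  · ext
    · rw [Prod.pow_fst, ← ofAdd_zsmul, smul_eq_mul, mul_comm]
    · simpa using ha
  · ext
    · rw [Prod.pow_fst, ← ofAdd_zsmul, smul_eq_mul]
    · simpa using hb
  · intro h
    exact hab (congrArg Prod.snd h)

theorem exists_noncommuting_model (m n : ℤ) (hm : 2 ≤ |m|) (hn : 2 ≤ |n|) :
    ∃ (L : Type) (_ : Group L) (t u x : L), t⁻¹ * x * t = x ^ n ∧ u⁻¹ * x * u = x ^ m ∧
      (t * x * t⁻¹) * (u * x * u⁻¹) ≠ (u * x * u⁻¹) * (t * x * t⁻¹) := by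
  obtain ⟨K, _, x, y, z, hx, hy, hz, hyx, hzx, hyz⟩ := exists_noncommuting_roots m n hm hn
  obtain ⟨K₁, _, f, t, hf, ht⟩ := exists_conj_embedding x y hx hy
  obtain ⟨L, _, g, u, hg, hu⟩ := exists_conj_embedding (f x) (f z)
    (fun k l h => hx (hf (by simpa using h))) (fun k l h => hz (hf (by simpa using h)))
  have ht' : g t * g (f x) * (g t)⁻¹ = g (f y) := by rw [← ht]; simp
  -- If `s x s⁻¹` is a `k`-th root of `x`, then `s⁻¹ x s = x ^ k`.
  have root : ∀ (s w v : L) (k : ℤ), s * w * s⁻¹ = v → v ^ k = w → s⁻¹ * w * s = w ^ k := by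
    rintro s w v k rfl h
    rw [conj_zpow] at h
    calc s⁻¹ * w * s = s⁻¹ * (s * w ^ k * s⁻¹) * s := by rw [h]
      _ = w ^ k := by group
  refine ⟨L, inferInstance, g t, u, g (f x), root _ _ _ _ ht' ?_, root _ _ _ _ hu ?_, ?_⟩
  · rw [← map_zpow, ← map_zpow, hyx]
  · rw [← map_zpow, ← map_zpow, hzx]
  · rw [ht', hu]
    intro h
    exact hyz (hf (hg (by simpa using h)))

open scoped commutatorElement

/-- For `|m|, |n| ≥ 2` the group `⟨t, u, x ∣ t⁻¹ x t = x^n, u⁻¹ x u = x^m⟩` is not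
residually finite. -/
theorem twoConj_not_residuallyFinite (m n : ℤ) (hm : 2 ≤ |m|) (hn : 2 ≤ |n|) :
    ¬ IsResiduallyFinite (PresentedGroup (twoConjRels m n)) := by
  intro hrf
  let t : PresentedGroup (twoConjRels m n) := PresentedGroup.of 0
  let u : PresentedGroup (twoConjRels m n) := PresentedGroup.of 1
  let x : PresentedGroup (twoConjRels m n) := PresentedGroup.of 2
  have ht : t⁻¹ * x * t = x ^ n := by
    have h := PresentedGroup.one_of_mem (rels := twoConjRels m n) (Or.inl rfl)
    simp only [map_mul, map_inv, map_zpow, zpow_neg] at h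
    exact mul_inv_eq_one.1 h
  have hu : u⁻¹ * x * u = x ^ m := by
    have h := PresentedGroup.one_of_mem (rels := twoConjRels m n) (Or.inr rfl)
    simp only [map_mul, map_inv, map_zpow, zpow_neg] at h
    exact mul_inv_eq_one.1 h
  have hne : ⁅t * x * t⁻¹, u * x * u⁻¹⁆ ≠ 1 := by
    obtain ⟨L, _, t', u', x', ht', hu', hne⟩ := exists_noncommuting_model m n hm hn
    have hrel : ∀ r ∈ twoConjRels m n, FreeGroup.lift ![t', u', x'] r = 1 := by
      rintro r (rfl | rfl)
      · simp [ht']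
      · simp [hu']
    intro h
    have h2 := congrArg (PresentedGroup.toGroup hrel) (commutatorElement_eq_one_iff_mul_comm.1 h)
    simp only [t, u, x, map_mul, map_inv, PresentedGroup.toGroup.of] at h2
    exact hne (by simpa using h2)
  obtain ⟨H, _, _, f, hf⟩ := hrf _ hne
  apply hf
  have h1 : f (t * x * t⁻¹) ∈ Subgroup.zpowers (f x) := by
    have := finite_conj_mem_zpowers (t := f t) (x := f x) (n := n)
      (by rw [← map_zpow, ← ht]; simp only [map_mul, map_inv])
    simpa using this
  have h2 : f (u * x * u⁻¹) ∈ Subgroup.zpowers (f x) := by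
    have := finite_conj_mem_zpowers (t := f u) (x := f x) (n := m)
      (by rw [← map_zpow, ← hu]; simp only [map_mul, map_inv])
    simpa using this
  rw [map_commutatorElement, commutatorElement_eq_one_iff_mul_comm]
  obtain ⟨k, hk⟩ := Subgroup.mem_zpowers_iff.1 h1
  obtain ⟨l, hl⟩ := Subgroup.mem_zpowers_iff.1 h2
  rw [← hk, ← hl, zpow_mul_comm]
end

section
/- Let n be an integer with |n| ≥ 2, let m be a nonzero integer, and let e ∈ {1, -1}. The presented group G = ⟨t, u, x ∣ t⁻¹ x t = x^n, u⁻¹ x^m u = x^{e·m}⟩ is not residually finite. -/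
/-- The relators `t⁻¹ x t x^{-n}` and `u⁻¹ x^m u x^{-e·m}` in the free group on the three
generators `t = 0`, `u = 1`, `x = 2`. -/
def conjPowRels (n m e : ℤ) : Set (FreeGroup (Fin 3)) :=
  {(FreeGroup.of 0)⁻¹ * FreeGroup.of 2 * FreeGroup.of 0 * (FreeGroup.of 2) ^ (-n),
   (FreeGroup.of 1)⁻¹ * (FreeGroup.of 2) ^ m * FreeGroup.of 1 *
     (FreeGroup.of 2) ^ (-(e * m))}

/-- In a finite group, the second relation passes from `x` to its conjugate `t x t⁻¹`, because
the latter is a power of `x`. -/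
lemma conj_pow_eq_of_finite {H : Type*} [Group H] [Finite H] (n m e : ℤ) (t u x : H)
    (h1 : t⁻¹ * x * t = x ^ n) (h2 : u⁻¹ * x ^ m * u = x ^ (e * m)) :
    u⁻¹ * (t * x * t⁻¹) ^ m * u = (t * x * t⁻¹) ^ (e * m) := by
  have hy : (t * x * t⁻¹) ^ n = x := by
    rw [conj_zpow, ← h1]; group
  have hle : Subgroup.zpowers x ≤ Subgroup.zpowers (t * x * t⁻¹) := by
    rw [Subgroup.zpowers_le]
    exact ⟨n, hy⟩
  have hcard : Nat.card (Subgroup.zpowers (t * x * t⁻¹)) ≤ Nat.card (Subgroup.zpowers x) := by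
    rw [Nat.card_zpowers, Nat.card_zpowers]
    exact (orderOf_injective (MulAut.conj t).toMonoidHom (MulAut.conj t).injective x).le
  have heq := Subgroup.eq_of_le_of_card_ge hle hcard
  have hmem : t * x * t⁻¹ ∈ Subgroup.zpowers x := heq ▸ Subgroup.mem_zpowers _
  obtain ⟨k, hk⟩ := Subgroup.mem_zpowers_iff.1 hmem
  have hu (z : H) : u⁻¹ * z * u = u⁻¹ * z * (u⁻¹)⁻¹ := by rw [inv_inv]
  rw [← hk, ← zpow_mul, ← zpow_mul, mul_comm k m, mul_comm k (e * m), zpow_mul, zpow_mul, ← h2,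
    hu, hu, conj_zpow]

/-- The permutation of `ℚ` that translates the subgroup `mℤ` by `m` and fixes every other
point. -/
noncomputable def cosetShift (m : ℚ) : Equiv.Perm ℚ :=
  open Classical in
  { toFun := fun q => if q ∈ AddSubgroup.zmultiples m then q + m else q
    invFun := fun q => if q ∈ AddSubgroup.zmultiples m then q - m else q
    left_inv := fun q => by
      have h := (AddSubgroup.zmultiples m).add_mem_cancel_right (y := q)
        (AddSubgroup.mem_zmultiples m)
      by_cases hq : q ∈ AddSubgroup.zmultiples m <;> simp [hq, h]
    right_inv := fun q => by
      by_cases hq : q ∈ AddSubgroup.zmultiples m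
      · simp [hq, sub_mem hq (AddSubgroup.mem_zmultiples m)]
      · simp [hq] }

lemma cosetShift_of_mem {m q : ℚ} (hq : q ∈ AddSubgroup.zmultiples m) :
    cosetShift m q = q + m := if_pos hq

lemma cosetShift_of_notMem {m q : ℚ} (hq : q ∉ AddSubgroup.zmultiples m) :
    cosetShift m q = q := if_neg hq

lemma cosetShift_add {m a : ℚ} (ha : a ∈ AddSubgroup.zmultiples m) (q : ℚ) :
    cosetShift m (q + a) = cosetShift m q + a := by
  have h := (AddSubgroup.zmultiples m).add_mem_cancel_right (y := q) ha
  by_cases hq : q ∈ AddSubgroup.zmultiples m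
  · rw [cosetShift_of_mem hq, cosetShift_of_mem (h.2 hq)]; ring
  · rw [cosetShift_of_notMem hq, cosetShift_of_notMem (fun h' => hq (h.1 h'))]

lemma addRight_zpow (a : ℚ) (k : ℤ) :
    (Equiv.addRight a : Equiv.Perm ℚ) ^ k = Equiv.addRight (k * a) := by
  have h : (Equiv.addRight a : Equiv.Perm ℚ) ^ k = Equiv.addRight (k • a) := by
    simp
  rw [h, zsmul_eq_mul]

/-- For `|n| ≥ 2`, `m ≠ 0` and `e = ±1`, the group
`⟨t, u, x ∣ t⁻¹ x t = x^n, u⁻¹ x^m u = x^{e·m}⟩` is not residually finite. -/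
theorem conjPow_not_residuallyFinite (n m e : ℤ) (hn : 2 ≤ |n|) (hm : m ≠ 0)
    (he : e = 1 ∨ e = -1) :
    ¬ IsResiduallyFinite (PresentedGroup (conjPowRels n m e)) := by
  intro hRF
  let g (i : Fin 3) : PresentedGroup (conjPowRels n m e) := PresentedGroup.of i
  have r1 : (g 0)⁻¹ * g 2 * g 0 = g 2 ^ n := by
    have h := PresentedGroup.one_of_mem (rels := conjPowRels n m e) (Or.inl rfl)
    simp only [map_mul, map_inv, map_zpow, zpow_neg] at h
    exact mul_inv_eq_one.1 h
  have r2 : (g 1)⁻¹ * g 2 ^ m * g 1 = g 2 ^ (e * m) := by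
    have h := PresentedGroup.one_of_mem (rels := conjPowRels n m e) (Or.inr rfl)
    simp only [map_mul, map_inv, map_zpow, zpow_neg] at h
    exact mul_inv_eq_one.1 h
  have key : (g 1)⁻¹ * (g 0 * g 2 * (g 0)⁻¹) ^ m * g 1
      = (g 0 * g 2 * (g 0)⁻¹) ^ (e * m) := by
    by_contra hne
    obtain ⟨H, _, _, f, hf⟩ := hRF _ (mt mul_inv_eq_one.1 hne)
    apply hf
    have h := conj_pow_eq_of_finite n m e (f (g 0)) (f (g 1)) (f (g 2))
      (by simpa using congrArg f r1) (by simpa using congrArg f r2)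
    rw [map_mul, map_inv, mul_inv_eq_one]
    simpa only [map_mul, map_inv, map_zpow] using h
  have hn0 : (n : ℚ) ≠ 0 := by
    rintro h
    have : n = 0 := by exact_mod_cast h
    simp [this] at hn
  have hm0 : (m : ℚ) ≠ 0 := by exact_mod_cast hm
  have hee : (e : ℚ) * e = 1 := by rcases he with rfl | rfl <;> norm_num
  have he0 : (e : ℚ) ≠ 0 := left_ne_zero_of_mul_eq_one hee
  let x : Equiv.Perm ℚ := Equiv.addRight 1
  let t : Equiv.Perm ℚ := Equiv.mulLeft₀ (n : ℚ)⁻¹ (inv_ne_zero hn0)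
  let u : Equiv.Perm ℚ := Equiv.mulLeft₀ (e : ℚ) he0 * cosetShift m
  have hx (k : ℤ) (q : ℚ) : (x ^ k) q = q + k := by
    simp [x]
  have ht (q : ℚ) : t q = (n : ℚ)⁻¹ * q := rfl
  have hu (q : ℚ) : u q = e * cosetShift m q := rfl
  have s1 : t⁻¹ * x * t = x ^ n := by
    rw [mul_assoc, inv_mul_eq_iff_eq_mul]
    ext q
    have := hx 1 (t q)
    rw [zpow_one] at this
    rw [Equiv.Perm.mul_apply, Equiv.Perm.mul_apply, this, hx, ht, ht]
    field_simp
    norm_num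
  have s2 : u⁻¹ * x ^ m * u = x ^ (e * m) := by
    rw [mul_assoc, inv_mul_eq_iff_eq_mul]
    ext q
    have hmem : ((e * m : ℤ) : ℚ) ∈ AddSubgroup.zmultiples (m : ℚ) := ⟨e, by simp⟩
    change (x ^ m) (u q) = u ((x ^ (e * m)) q)
    rw [hx, hx, hu, hu, cosetShift_add hmem]
    push_cast
    linear_combination (-(m : ℚ)) * hee
  have hy : t * x * t⁻¹ = Equiv.addRight (n : ℚ)⁻¹ := by
    rw [mul_inv_eq_iff_eq_mul]
    ext q
    have := hx 1 q
    rw [zpow_one] at this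
    rw [Equiv.Perm.mul_apply, Equiv.Perm.mul_apply, this, ht, ht]
    simp
    ring
  have hrels : ∀ r ∈ conjPowRels n m e, FreeGroup.lift ![t, u, x] r = 1 := by
    rintro r (rfl | rfl)
    · simpa [mul_inv_eq_one] using s1
    · simpa [mul_inv_eq_one] using s2
  have hF (i : Fin 3) : PresentedGroup.toGroup hrels (g i) = ![t, u, x] i :=
    PresentedGroup.toGroup.of hrels
  have hk := congrArg (PresentedGroup.toGroup hrels) key
  simp only [map_mul, map_inv, map_zpow, hF] at hk
  change u⁻¹ * (t * x * t⁻¹) ^ m * u = (t * x * t⁻¹) ^ (e * m) at hk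
  rw [hy, mul_assoc, inv_mul_eq_iff_eq_mul, addRight_zpow, addRight_zpow] at hk
  -- Both sides are evaluated at `0`, which `cosetShift` moves, whereas it fixes `em/n`.
  have h0 := congrArg (fun p : Equiv.Perm ℚ => p 0) hk
  simp only [Equiv.Perm.mul_apply, Equiv.coe_addRight, hu, zero_add] at h0
  have hnot : ((e * m : ℤ) : ℚ) * (n : ℚ)⁻¹ ∉ AddSubgroup.zmultiples (m : ℚ) := by
    rintro ⟨k, hk⟩
    have h3 : (e : ℚ) = k * n := by
      simp only [zsmul_eq_mul] at hk
      push_cast at hk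
      field_simp at hk
      linear_combination -hk
    have h4 : e = k * n := by exact_mod_cast h3
    have h5 : n ∣ 1 := by
      rcases he with rfl | rfl
      · exact ⟨k, by linarith⟩
      · exact ⟨-k, by linarith⟩
    have h6 := Int.isUnit_iff_abs_eq.1 (isUnit_of_dvd_one h5)
    omega
  rw [cosetShift_of_notMem hnot, cosetShift_of_mem (zero_mem _)] at h0
  apply mul_ne_zero he0 hm0
  push_cast at h0
  linear_combination h0 + (m : ℚ) * (n : ℚ)⁻¹ * hee
end
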